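/- Let Ω and Ω' be open bounded convex sets in ℝⁿ with their Hilbert metrics which are isometric. If Ω is a homogeneous cone (a cone on which PGL(Ω) acts transitively), then Ω' is a homogeneous cone. -/

import Mathlib

/-! The domains are lifted to open cones `K`, `K'` in `ℝⁿ⁺¹`, and the isometry to a positively
homogeneous map `T : K → K'`. The Hilbert metric is then `log (M(x/y) M(y/x))`, where `M(x/y)` is
the least `c` with `c y - x` in the closed cone (`CDom.hilbertDist_eq`). A vertex of the domain is a
linear projection `P` onto a ray which splits `K` as the sum of this ray and a complementary cone
(`IsVertex`); the flow `P + r (1 - P)`, `r > 0`, acts on `K` by isometries.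

*The image is a cone.* The orbits of the flow of a vertex are unique geodesics (`IsVertex.rigid`), so
`T` maps them to straight lines (`ProjIso.orbit`). Orbits stay at constant distance from each other,
so the end points of their images span two fixed faces of the closure of `K'`; uniqueness of the
geodesics makes the spans of these faces complementary. Hence the image of the flow is the flow of
a splitting `P'` of `K'` (`ProjIso.exists_join`). Comparing the metric along the two flows
(`real_rank_one`) shows that one of the summands of this splitting is a ray. So `K'` has a vertex,
and `T` either preserves or reverses the flows of the two vertices (`ProjIso.exists_vertex`).

*Isometries preserving a vertex flow are projective.* After rescaling `T` along rays, the
asymptotics of the metric along the flow show that `T` preserves `M(x/y)` itself, so it is an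
order isomorphism. Order intervals in extreme directions are segments, hence `T` is affine
along extreme directions, with increments independent of the base point; since the cone is
generated by its extreme rays, `T` is linear (`ProjIso.exists_equiv`).

*Homogeneity.* Let `g` be a linear automorphism of `K`, and consider the vertices `P` and `g P g⁻¹`.
If `T` preserves one of the two flows, then it is linear up to scaling and conjugates `g` to an
automorphism of `K'`. Otherwise `T` reverses both flows, so `T g T⁻¹` preserves the flow of a vertex
of `K'` and is itself linear up to scaling (`ProjIso.homogeneous`). -/

open Set
open scoped LinearAlgebra.Projectivization
open scoped Classical

noncomputable section

abbrev Euc (n : ℕ) := EuclideanSpace ℝ (Fin n)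

/-- `α` and `β` are the two points where the straight line through `x` and `y`
meets the boundary of `Ω`, labeled so that `|α−x| < |α−y|` and `|β−y| < |β−x|`. -/
def IsHilbertPair {n : ℕ} (Ω : Set (Euc n)) (x y α β : Euc n) : Prop :=
  α ∈ frontier Ω ∧ β ∈ frontier Ω ∧
    Collinear ℝ ({α, x, y} : Set (Euc n)) ∧ Collinear ℝ ({β, x, y} : Set (Euc n)) ∧
    dist α x < dist α y ∧ dist β y < dist β x

/-- The Hilbert metric of `Ω`: `d_Ω(x,y) = ln((|α−y|/|α−x|)·(|β−x|/|β−y|))` for `x ≠ y`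
(where `α, β` are as in `IsHilbertPair`; for `x ≠ y` in a convex domain `Ω` such a pair
exists and is unique), and `d_Ω(x,x) = 0` (no such pair exists when `x = y`). -/
def hilbertDist {n : ℕ} (Ω : Set (Euc n)) (x y : Euc n) : ℝ :=
  if h : ∃ p : Euc n × Euc n, IsHilbertPair Ω x y p.1 p.2 then
    Real.log ((dist h.choose.1 y / dist h.choose.1 x) * (dist h.choose.2 x / dist h.choose.2 y))
  else 0

/-- An isometry of Hilbert geometries: a surjective distance preserving map. -/
def IsHilbertIsometry {n : ℕ} (Ω Ω' : Set (Euc n)) (τ : Euc n → Euc n) : Prop :=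
  Set.MapsTo τ Ω Ω' ∧ Set.SurjOn τ Ω Ω' ∧
    ∀ x ∈ Ω, ∀ y ∈ Ω, hilbertDist Ω' (τ x) (τ y) = hilbertDist Ω x y

/-- The standard affine chart `ℝⁿ → ℝPⁿ`, `x ↦ [x : 1]`. -/
def chart {n : ℕ} (x : Euc n) : Projectivization ℝ (Fin (n + 1) → ℝ) :=
  Projectivization.mk ℝ ((Fin.snoc (fun i => x i) 1 : Fin (n + 1) → ℝ))
    (fun h => one_ne_zero (α := ℝ) (by simpa using congrFun h (Fin.last n)))

/-- The projective transformation of `ℝPⁿ` induced by an element of `GL_{n+1}(ℝ)`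
(every element of `PGL_{n+1}(ℝ)` arises this way). -/
def projMap {n : ℕ} (g : (Fin (n + 1) → ℝ) ≃ₗ[ℝ] (Fin (n + 1) → ℝ)) :
    Projectivization ℝ (Fin (n + 1) → ℝ) → Projectivization ℝ (Fin (n + 1) → ℝ) :=
  Projectivization.map (g : (Fin (n + 1) → ℝ) →ₗ[ℝ] (Fin (n + 1) → ℝ)) g.injective

/-- `τ` agrees on `Ω` with (the restriction of) a projective transformation of `ℝPⁿ`. -/
def IsProjectiveOn {n : ℕ} (Ω : Set (Euc n)) (τ : Euc n → Euc n) : Prop :=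
  ∃ g : (Fin (n + 1) → ℝ) ≃ₗ[ℝ] (Fin (n + 1) → ℝ),
    ∀ x ∈ Ω, chart (τ x) = projMap g (chart x)

/-- A ray in `Ω`: the intersection with `Ω` of a Euclidean ray starting at a point of `Ω`. -/
def IsRayIn {n : ℕ} (Ω r : Set (Euc n)) : Prop :=
  ∃ p ∈ Ω, ∃ d : Euc n, d ≠ 0 ∧ r = {x | ∃ t : ℝ, 0 ≤ t ∧ x = p + t • d} ∩ Ω

/-- A line in `Ω`: the nonempty intersection of a straight line with `Ω`. -/
def IsLineIn {n : ℕ} (Ω L : Set (Euc n)) : Prop :=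
  L.Nonempty ∧ ∃ p d : Euc n, d ≠ 0 ∧ L = {x | ∃ t : ℝ, x = p + t • d} ∩ Ω

/-- `a` is an accumulation point of the set `s ⊆ Ω` on the boundary of `Ω`.
For a ray `r` in a convex domain `Ω` there is exactly one such point, denoted `a(r)`. -/
def IsBdryLimit {n : ℕ} (Ω s : Set (Euc n)) (a : Euc n) : Prop :=
  a ∈ frontier Ω ∧ a ∈ closure s

/-- `e` is a focusing point of the isometry `τ : Ω → Ω'`: an extreme point of the closure
of `Ω` such that for any two rays `r₁, r₂` in `Ω` with `a(r₁) = a(r₂) = e` one has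
`a(τ(r₁)) = a(τ(r₂))`. -/
def IsFocusingPoint {n : ℕ} (Ω Ω' : Set (Euc n)) (τ : Euc n → Euc n) (e : Euc n) : Prop :=
  e ∈ Set.extremePoints ℝ (closure Ω) ∧
    ∀ r₁ r₂ : Set (Euc n), IsRayIn Ω r₁ → IsRayIn Ω r₂ →
      IsBdryLimit Ω r₁ e → IsBdryLimit Ω r₂ e →
      ∀ a₁ a₂ : Euc n, IsBdryLimit Ω' (τ '' r₁) a₁ → IsBdryLimit Ω' (τ '' r₂) a₂ → a₁ = a₂

/-- An extreme line in `Ω`: a line in `Ω` whose closure meets `∂Ω` in extreme points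
of the closure of `Ω`. -/
def IsExtremeLine {n : ℕ} (Ω L : Set (Euc n)) : Prop :=
  IsLineIn Ω L ∧ ∀ x ∈ closure L ∩ frontier Ω, x ∈ Set.extremePoints ℝ (closure Ω)

/-- `s` is rigid in `Ω`: for any two points `a, b` of `s` the segment `[a,b]` is the
unique geodesic from `a` to `b` in `(Ω, d_Ω)`, i.e. every point `z` with
`d(a,z) + d(z,b) = d(a,b)` lies on the segment `[a,b]`. -/
def IsRigidSet {n : ℕ} (Ω s : Set (Euc n)) : Prop :=
  ∀ a ∈ s, ∀ b ∈ s, ∀ z ∈ Ω,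
    hilbertDist Ω a z + hilbertDist Ω z b = hilbertDist Ω a b → z ∈ segment ℝ a b

/-- A face of a closed convex set `C`: a convex subset `F ⊆ C` such that whenever an open
segment between two points of `C` meets `F`, the whole closed segment lies in `F`. -/
def IsFace {n : ℕ} (C F : Set (Euc n)) : Prop :=
  Convex ℝ F ∧ IsExtreme ℝ C F

/-- A face of `C` which is neither empty nor all of `C`. -/
def IsProperFace {n : ℕ} (C F : Set (Euc n)) : Prop :=
  IsFace C F ∧ F.Nonempty ∧ F ≠ C

/-- `Ω` is a cone with vertex `v` and base `B`: `B` is an `(n−1)`-dimensional convex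
domain lying in a hyperplane not containing `v`, and `Ω` is the union of the open
segments from `v` to the points of `B`. -/
def IsConeWith {n : ℕ} (Ω : Set (Euc n)) (v : Euc n) (B : Set (Euc n)) : Prop :=
  ∃ (f : Euc n →ₗ[ℝ] ℝ) (c : ℝ), f ≠ 0 ∧ (∀ b ∈ B, f b = c) ∧ f v ≠ c ∧
    B.Nonempty ∧ Convex ℝ B ∧ Bornology.IsBounded B ∧
    B = intrinsicInterior ℝ B ∧
    (affineSpan ℝ B : Set (Euc n)) = {x | f x = c} ∧
    Ω = ⋃ b ∈ B, openSegment ℝ v b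

/-- `Ω` is a cone. -/
def IsCone {n : ℕ} (Ω : Set (Euc n)) : Prop :=
  ∃ v B, IsConeWith Ω v B

/-- `Ω` is homogeneous: `PGL(Ω)` acts transitively on `Ω`. -/
def IsHomogeneousDomain {n : ℕ} (Ω : Set (Euc n)) : Prop :=
  ∀ x ∈ Ω, ∀ y ∈ Ω, ∃ g : (Fin (n + 1) → ℝ) ≃ₗ[ℝ] (Fin (n + 1) → ℝ),
    projMap g '' (chart '' Ω) = chart '' Ω ∧ projMap g (chart x) = chart y

set_option linter.unusedSectionVars false

/-! ### Proper open convex cones -/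

section Cones

variable {E : Type*} [NormedAddCommGroup E] [NormedSpace ℝ E] [FiniteDimensional ℝ E]

/-- A nonempty open convex cone whose closure contains no line. The order used throughout is
`x ≤ y ↔ y - x ∈ closure K`. -/
structure PCone (K : Set E) : Prop where
  isOpen : IsOpen K
  convex : Convex ℝ K
  smul_mem : ∀ x ∈ K, ∀ r : ℝ, 0 < r → r • x ∈ K
  nonempty : K.Nonempty
  zero_notMem : (0 : E) ∉ K
  salient : ∀ x ∈ closure K, -x ∈ closure K → x = 0

/-- The gauge `M(x/y)`: the least `c` with `x ≤ c y`. -/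
def coneGauge (K : Set E) (x y : E) : ℝ := sInf {c : ℝ | c • y - x ∈ closure K}

/-- The exponential of the Hilbert metric of the cone, `M(x/y) M(y/x)`. It is invariant under
positive rescaling of either argument. -/
def hN (K : Set E) (x y : E) : ℝ := coneGauge K x y * coneGauge K y x

namespace PCone

variable {K : Set E}

theorem add_mem (h : PCone K) {x y : E} (hx : x ∈ K) (hy : y ∈ K) : x + y ∈ K := by
  have := h.convex hx hy (a := 1/2) (b := 1/2) (by norm_num) (by norm_num) (by norm_num)
  have := h.smul_mem _ this 2 (by norm_num)
  rwa [smul_add, smul_smul, smul_smul, show (2:ℝ) * (1/2) = 1 by norm_num, one_smul,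
    one_smul] at this

theorem zero_cl (h : PCone K) : (0 : E) ∈ closure K := by
  obtain ⟨x, hx⟩ := h.nonempty
  have ht : Filter.Tendsto (fun r : ℝ => r • x) (nhdsWithin 0 (Ioi 0)) (nhds ((0:ℝ) • x)) :=
    ((continuous_id.smul continuous_const).tendsto 0).mono_left nhdsWithin_le_nhds
  rw [zero_smul] at ht
  refine mem_closure_of_tendsto ht ?_
  filter_upwards [self_mem_nhdsWithin] with r hr using h.smul_mem x hx r hr

theorem smul_cl (h : PCone K)
    {x : E} (hx : x ∈ closure K) {r : ℝ} (hr : 0 ≤ r) : r • x ∈ closure K := by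
  rcases hr.eq_or_lt with rfl | hr
  · simpa using h.zero_cl
  · exact map_mem_closure (continuous_const_smul r) hx fun y hy => h.smul_mem y hy r hr

theorem add_cl (h : PCone K)
    {x y : E} (hx : x ∈ closure K) (hy : y ∈ closure K) : x + y ∈ closure K :=
  map_mem_closure₂ continuous_add hx hy fun _ ha _ hb => h.add_mem ha hb

theorem exists_sub_mem (h : PCone K)
    {x : E} (hx : x ∈ K) (z : E) : ∃ ε : ℝ, 0 < ε ∧ x - ε • z ∈ K := by
  have ht : Filter.Tendsto (fun r : ℝ => x - r • z) (nhdsWithin 0 (Ioi 0))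
      (nhds (x - (0:ℝ) • z)) :=
    ((continuous_const.sub (continuous_id.smul continuous_const)).tendsto 0).mono_left
      nhdsWithin_le_nhds
  rw [zero_smul, sub_zero] at ht
  have h1 := ht.eventually (h.isOpen.mem_nhds hx)
  obtain ⟨r, hr, hr'⟩ := (h1.and self_mem_nhdsWithin).exists
  exact ⟨r, hr', hr⟩

theorem add_mem_cl (h : PCone K) {x y : E} (hx : x ∈ K) (hy : y ∈ closure K) : x + y ∈ K := by
  -- `y` is a limit of points of `K`, so `y = y' + d` with `y' ∈ K` and `x + d ∈ K`
  have h1 : {z : E | x + (y - z) ∈ K} ∈ nhds y := by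
    apply (h.isOpen.preimage (f := fun z => x + (y - z)) (by fun_prop)).mem_nhds
    simpa using hx
  obtain ⟨z, hz, hzK⟩ := mem_closure_iff_nhds.1 hy _ h1
  have := h.add_mem hz hzK
  simpa [add_assoc] using this

/-- Archimedean property of the closed cone. -/
theorem cl_of_forall {a b : E} (hab : ∀ ε : ℝ, 0 < ε → ε ≤ 1 → a + ε • b ∈ closure K) :
    a ∈ closure K := by
  have ht : Filter.Tendsto (fun r : ℝ => a + r • b) (nhdsWithin 0 (Ioi 0))
      (nhds (a + (0:ℝ) • b)) :=
    ((continuous_const.add (continuous_id.smul continuous_const)).tendsto 0).mono_left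
      nhdsWithin_le_nhds
  rw [zero_smul, add_zero] at ht
  refine isClosed_closure.mem_of_tendsto ht ?_
  have : Ioc (0:ℝ) 1 ∈ nhdsWithin (0:ℝ) (Ioi 0) := Ioc_mem_nhdsGT one_pos
  filter_upwards [this] with r hr using hab r hr.1 hr.2

theorem nonneg_of_smul_cl (h : PCone K) {y : E} (hy : y ∈ closure K) (hy0 : y ≠ 0) {c : ℝ}
    (hc : c • y ∈ closure K) : 0 ≤ c := by
  by_contra hlt
  push Not at hlt
  apply hy0
  refine h.salient y hy ?_
  have := h.smul_cl hc (r := (-c)⁻¹) (by have : 0 < -c := by linarith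
                                         positivity)
  rwa [smul_smul, show (-c)⁻¹ * c = -1 by
    rw [inv_neg, neg_mul, inv_mul_cancel₀ hlt.ne], neg_one_smul] at this

theorem eq_of_cl (h : PCone K)
    {x y : E} (h1 : x - y ∈ closure K) (h2 : y - x ∈ closure K) : x = y := by
  have := h.salient (x - y) h1 (by rwa [neg_sub])
  exact sub_eq_zero.1 this

/-- The infimum defining the gauge is attained as soon as it is taken over a nonempty set. -/
theorem gauge_le_iff (h : PCone K) {x y : E} (hy : y ∈ closure K) (hy0 : y ≠ 0)
    (hex : ∃ c : ℝ, c • y - x ∈ closure K) {c : ℝ} :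
    c • y - x ∈ closure K ↔ coneGauge K x y ≤ c := by
  have hup : ∀ a b : ℝ, a ≤ b → a • y - x ∈ closure K → b • y - x ∈ closure K := by
    intro a b hab ha
    have := h.add_cl ha (h.smul_cl hy (sub_nonneg.2 hab))
    rwa [show a • y - x + (b - a) • y = b • y - x by module] at this
  have hcl : IsClosed {c : ℝ | c • y - x ∈ closure K} :=
    isClosed_closure.preimage (f := fun c : ℝ => c • y - x) (by fun_prop)
  obtain ⟨c0, hc0⟩ := hex
  have hbdd : BddBelow {c : ℝ | c • y - x ∈ closure K} := by
    by_contra hnb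
    rw [not_bddBelow_iff] at hnb
    apply hy0
    refine h.salient y hy (cl_of_forall (b := -x) ?_)
    intro ε hε _
    obtain ⟨c, hc, hcl'⟩ := hnb (-ε⁻¹)
    have := h.smul_cl (hup _ _ hcl'.le hc) hε.le
    rwa [smul_sub, smul_smul, show ε * -ε⁻¹ = -1 by field_simp, neg_one_smul, sub_eq_add_neg,
      ← smul_neg] at this
  constructor
  · intro hc
    exact csInf_le hbdd hc
  · intro hc
    exact hup _ _ hc (hcl.csInf_mem ⟨c0, hc0⟩ hbdd)

theorem gauge_eq (h : PCone K) {x y : E} (hy : y ∈ closure K) (hy0 : y ≠ 0) {m : ℝ}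
    (hm : ∀ c : ℝ, c • y - x ∈ closure K ↔ m ≤ c) : coneGauge K x y = m := by
  have hex : ∃ c : ℝ, c • y - x ∈ closure K := ⟨m, (hm m).2 le_rfl⟩
  apply le_antisymm
  · exact (h.gauge_le_iff hy hy0 hex).1 ((hm m).2 le_rfl)
  · exact (hm _).1 ((h.gauge_le_iff hy hy0 hex).2 le_rfl)

theorem gauge_mem (h : PCone K) {x y : E} (hy : y ∈ closure K) (hy0 : y ≠ 0)
    (hex : ∃ c : ℝ, c • y - x ∈ closure K) : coneGauge K x y • y - x ∈ closure K :=
  (h.gauge_le_iff hy hy0 hex).2 le_rfl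

theorem gauge_pos (h : PCone K)
    {x y : E} (hy : y ∈ closure K) (hy0 : y ≠ 0) (hx : x ∈ closure K) (hx0 : x ≠ 0)
    (hex : ∃ c : ℝ, c • y - x ∈ closure K) : 0 < coneGauge K x y := by
  by_contra hle
  push Not at hle
  have h1 := h.gauge_mem hy hy0 hex
  have h2 := h.smul_cl hy (r := -coneGauge K x y) (by linarith)
  have := h.add_cl h1 h2
  exact hx0 (h.salient x hx (by
    rwa [show coneGauge K x y • y - x + (-coneGauge K x y) • y = -x by module] at this))

theorem gauge_smul (h : PCone K) {x y : E} (hy : y ∈ closure K) (hy0 : y ≠ 0)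
    (hex : ∃ c : ℝ, c • y - x ∈ closure K) {r s : ℝ} (hr : 0 < r) (hs : 0 < s) :
    coneGauge K (r • x) (s • y) = r / s * coneGauge K x y := by
  apply h.gauge_eq (h.smul_cl hy hs.le) (smul_ne_zero hs.ne' hy0)
  intro c
  have : c • s • y - r • x ∈ closure K ↔ (c * s / r) • y - x ∈ closure K := by
    constructor
    · intro hc
      have := h.smul_cl hc (r := r⁻¹) (by positivity)
      rwa [show r⁻¹ • (c • s • y - r • x) = (c * s / r) • y - x by
        rw [smul_sub, smul_smul, smul_smul, smul_smul, inv_mul_cancel₀ hr.ne', one_smul]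
        congr 2; field_simp] at this
    · intro hc
      have := h.smul_cl hc (r := r) hr.le
      rwa [show r • ((c * s / r) • y - x) = c • s • y - r • x by
        rw [smul_sub, smul_smul, smul_smul]
        congr 2; field_simp] at this
  rw [this, h.gauge_le_iff hy hy0 hex, le_div_iff₀ hr, div_mul_eq_mul_div, div_le_iff₀ hs,
    mul_comm]

/-- If two cone vectors satisfy `M(x/y) M(y/x) ≤ 1` they are proportional. -/
theorem eq_of_hN_le (h : PCone K) {x y : E} (hy : y ∈ closure K) (hy0 : y ≠ 0) (hx : x ∈ closure K)
    (hx0 : x ≠ 0) (hex : ∃ c : ℝ, c • y - x ∈ closure K) (hex' : ∃ c : ℝ, c • x - y ∈ closure K)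
    (hN1 : hN K x y ≤ 1) : ∃ s : ℝ, 0 < s ∧ x = s • y := by
  have p1 := h.gauge_pos hy hy0 hx hx0 hex
  have p2 := h.gauge_pos hx hx0 hy hy0 hex'
  refine ⟨coneGauge K x y, p1, h.eq_of_cl ?_ (h.gauge_mem hy hy0 hex)⟩
  have h1 : coneGauge K y x ≤ (coneGauge K x y)⁻¹ := by
    rw [← one_div, le_div_iff₀ p1, mul_comm]; exact hN1
  have h2 := h.smul_cl ((h.gauge_le_iff hx hx0 hex').2 h1) p1.le
  rwa [smul_sub, smul_smul, mul_inv_cancel₀ p1.ne', one_smul] at h2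

theorem one_le_hN (h : PCone K) {x y : E} (hy : y ∈ closure K) (hy0 : y ≠ 0) (hx : x ∈ closure K)
    (hx0 : x ≠ 0) (hex : ∃ c : ℝ, c • y - x ∈ closure K)
    (hex' : ∃ c : ℝ, c • x - y ∈ closure K) : 1 ≤ hN K x y := by
  have p1 := h.gauge_pos hy hy0 hx hx0 hex
  have h1 := h.gauge_mem hy hy0 hex
  have h2 := h.smul_cl (h.gauge_mem hx hx0 hex') p1.le
  have h3 := h.add_cl h1 h2
  rw [show coneGauge K x y • y - x + coneGauge K x y • (coneGauge K y x • x - y)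
    = (coneGauge K x y * coneGauge K y x - 1) • x by module] at h3
  have := h.nonneg_of_smul_cl hx hx0 h3
  unfold hN; linarith

theorem exists_le (h : PCone K) {y : E} (hy : y ∈ K) (x : E) : ∃ c : ℝ, c • y - x ∈ closure K := by
  obtain ⟨ε, hε, hm⟩ := h.exists_sub_mem hy x
  refine ⟨ε⁻¹, ?_⟩
  have := h.smul_cl (subset_closure hm) (r := ε⁻¹) (by positivity)
  rwa [smul_sub, smul_smul, inv_mul_cancel₀ hε.ne', one_smul] at this

/-- The open cone spans: a subspace containing it is everything. -/
theorem mem_of_forall (h : PCone K) {V : Submodule ℝ E} (hV : ∀ x ∈ K, x ∈ V) (z : E) : z ∈ V := by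
  obtain ⟨x, hx⟩ := h.nonempty
  obtain ⟨ε, hε, hm⟩ := h.exists_sub_mem hx z
  have h1 := V.sub_mem (hV x hx) (hV _ hm)
  rw [sub_sub_cancel] at h1
  have := V.smul_mem ε⁻¹ h1
  rwa [smul_smul, inv_mul_cancel₀ hε.ne', one_smul] at this

theorem ne_zero (h : PCone K) {x : E} (hx : x ∈ K) : x ≠ 0 := fun h0 => h.zero_notMem (h0 ▸ hx)

theorem gauge_le (h : PCone K) {x y : E} (hy : y ∈ K) {c : ℝ} :
    c • y - x ∈ closure K ↔ coneGauge K x y ≤ c :=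
  h.gauge_le_iff (subset_closure hy) (h.ne_zero hy) (h.exists_le hy x)

theorem gauge_pos' (h : PCone K) {x y : E} (hx : x ∈ K) (hy : y ∈ K) : 0 < coneGauge K x y :=
  h.gauge_pos (subset_closure hy) (h.ne_zero hy) (subset_closure hx) (h.ne_zero hx)
    (h.exists_le hy x)

theorem gauge_self (h : PCone K) {y : E} (hy : y ∈ K) : coneGauge K y y = 1 := by
  apply h.gauge_eq (subset_closure hy) (h.ne_zero hy)
  intro c
  rw [show c • y - y = (c - 1) • y by module]
  constructor
  · intro hc
    have := h.nonneg_of_smul_cl (subset_closure hy) (h.ne_zero hy) hc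
    linarith
  · intro hc
    exact h.smul_cl (subset_closure hy) (by linarith)

theorem one_le_hN' (h : PCone K) {x y : E} (hx : x ∈ K) (hy : y ∈ K) : 1 ≤ hN K x y :=
  h.one_le_hN (subset_closure hy) (h.ne_zero hy) (subset_closure hx) (h.ne_zero hx)
    (h.exists_le hy x) (h.exists_le hx y)

theorem eq_of_hN (h : PCone K) {x y : E} (hx : x ∈ K) (hy : y ∈ K) (h1 : hN K x y ≤ 1) :
    ∃ s : ℝ, 0 < s ∧ x = s • y :=
  h.eq_of_hN_le (subset_closure hy) (h.ne_zero hy) (subset_closure hx) (h.ne_zero hx)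
    (h.exists_le hy x) (h.exists_le hx y) h1

theorem hN_smul (h : PCone K)
    {x y : E} (hx : x ∈ K) (hy : y ∈ K) {r s : ℝ} (hr : 0 < r) (hs : 0 < s) :
    hN K (r • x) (s • y) = hN K x y := by
  unfold hN
  rw [h.gauge_smul (subset_closure hy) (h.ne_zero hy) (h.exists_le hy x) hr hs,
    h.gauge_smul (subset_closure hx) (h.ne_zero hx) (h.exists_le hx y) hs hr]
  field_simp

end PCone

theorem hN_comm (K : Set E) (x y : E) : hN K x y = hN K y x := mul_comm _ _

/-! ### Boundary pairs, splittings and their flows -/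

/-- `A` and `B` span a two-dimensional section of the closed cone whose extreme rays they are. -/
def BPair (K : Set E) (A B : E) : Prop :=
  ∀ a b : ℝ, a • A + b • B ∈ closure K ↔ 0 ≤ a ∧ 0 ≤ b

namespace BPair

variable {K : Set E} {A B : E}

theorem left_cl (hb : BPair K A B)
    : A ∈ closure K := by simpa using (hb 1 0).2 ⟨zero_le_one, le_rfl⟩

theorem right_cl (hb : BPair K A B)
    : B ∈ closure K := by simpa using (hb 0 1).2 ⟨le_rfl, zero_le_one⟩

theorem left_ne (hb : BPair K A B) : A ≠ 0 := by
  rintro rfl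
  have h0 := hb.right_cl
  have := ((hb (-1) 1).1 (by simpa using h0)).1
  linarith

theorem right_ne (hb : BPair K A B) : B ≠ 0 := by
  rintro rfl
  have h0 := hb.left_cl
  have := ((hb 1 (-1)).1 (by simpa using h0)).2
  linarith

theorem smul (hb : BPair K A B) {s t : ℝ} (hs : 0 < s) (ht : 0 < t) : BPair K (s • A) (t • B) := by
  intro a b
  rw [smul_smul, smul_smul, hb, mul_nonneg_iff_of_pos_right hs, mul_nonneg_iff_of_pos_right ht]

theorem gauge_line (hb : BPair K A B) (h : PCone K) {ρ σ : ℝ} (hσ : 0 < σ) :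
    coneGauge K (A + ρ • B) (A + σ • B) = max 1 (ρ / σ) := by
  have hcl : A + σ • B ∈ closure K := by
    simpa using (hb 1 σ).2 ⟨zero_le_one, hσ.le⟩
  have hne : A + σ • B ≠ 0 := by
    intro h0
    have h1 := (hb (-1) (-σ)).1 (by
      rw [show (-1:ℝ) • A + (-σ) • B = -(A + σ • B) by module, h0, neg_zero]
      exact h.zero_cl)
    linarith [h1.1]
  apply h.gauge_eq hcl hne
  intro c
  rw [show c • (A + σ • B) - (A + ρ • B) = (c - 1) • A + (c * σ - ρ) • B by module, hb,
    max_le_iff, div_le_iff₀ hσ]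
  constructor <;> rintro ⟨h1, h2⟩ <;> constructor <;> linarith

/-- The Hilbert metric on the line through `A` and `B`. -/
theorem hN_line (hb : BPair K A B) (h : PCone K) {ρ σ : ℝ} (hρ : 0 < ρ) (hσ : 0 < σ) :
    hN K (A + ρ • B) (A + σ • B) = max (ρ / σ) (σ / ρ) := by
  unfold hN
  rw [hb.gauge_line h hσ, hb.gauge_line h hρ]
  rcases le_total ρ σ with hle | hle
  · have h1 : ρ / σ ≤ 1 := (div_le_one hσ).2 hle
    have h2 : 1 ≤ σ / ρ := (one_le_div hρ).2 hle
    rw [max_eq_left h1, max_eq_right h2, max_eq_right (h1.trans h2), one_mul]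
  · have h1 : σ / ρ ≤ 1 := (div_le_one hρ).2 hle
    have h2 : 1 ≤ ρ / σ := (one_le_div hσ).2 hle
    rw [max_eq_left h1, max_eq_right h2, max_eq_left (h1.trans h2), mul_one]

/-- A boundary pair is determined by its sum and one further point of its line. -/
theorem unique (hb : BPair K A B) {A' B' : E} (hb' : BPair K A' B') (h1 : A + B = A' + B') {κ : ℝ}
    (h2 : A + (2:ℝ) • B = κ • (A' + (2:ℝ) • B')) : A = A' ∧ B = B' := by
  have eB : B = (κ - 1) • A' + (2 * κ - 1) • B' := by
    have : B = (A + (2:ℝ) • B) - (A + B) := by module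
    rw [this, h1, h2]; module
  have eA : A = (2 - κ) • A' + (2 - 2 * κ) • B' := by
    have : A = (2:ℝ) • (A + B) - (A + (2:ℝ) • B) := by module
    rw [this, h1, h2]; module
  have c1 := ((hb' _ _).1 (eA ▸ hb.left_cl)).2
  have c2 := ((hb' _ _).1 (eB ▸ hb.right_cl)).1
  have hκ : κ = 1 := by linarith
  subst hκ
  constructor
  · rw [eA]; module
  · rw [eB]; module

end BPair

/-- Two non-proportional points of the cone lie on the line of a boundary pair. -/
theorem exists_bpair {K : Set E} (h : PCone K) {X Y : E} (hX : X ∈ K) (hY : Y ∈ K) {R : ℝ}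
    (hR : 1 < R) (hN' : hN K X Y = R) :
    ∃ A B : E, BPair K A B ∧ X = A + B ∧ ∃ s : ℝ, 0 < s ∧ Y = s • (A + R • B) := by
  set m1 := coneGauge K X Y with hm1
  set m2 := coneGauge K Y X with hm2
  have hR' : m1 * m2 = R := hN'
  have p1 : 0 < m1 := h.gauge_pos' hX hY
  have p2 : 0 < m2 := h.gauge_pos' hY hX
  have hR1 : 0 < R - 1 := by linarith
  set A := (m1 / (R - 1)) • (m2 • X - Y) with hA
  set B := (R - 1)⁻¹ • (m1 • Y - X) with hB
  have clA : A ∈ closure K := h.smul_cl ((h.gauge_le hX).2 le_rfl) (by positivity)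
  have clB : B ∈ closure K := h.smul_cl ((h.gauge_le hY).2 le_rfl) (by positivity)
  have eX : X = A + B := by
    rw [hA, hB, show (m1 / (R - 1)) • (m2 • X - Y) + (R - 1)⁻¹ • (m1 • Y - X)
      = ((R - 1)⁻¹ * (m1 * m2 - 1)) • X by module, hR', inv_mul_cancel₀ hR1.ne', one_smul]
  have eY : m1 • Y = A + R • B := by
    rw [hA, hB, ← hR', show (m1 / (m1 * m2 - 1)) • (m2 • X - Y) +
      (m1 * m2) • (m1 * m2 - 1)⁻¹ • (m1 • Y - X)
      = ((m1 * m2 - 1)⁻¹ * (m1 * m2 - 1)) • m1 • Y by module, hR',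
      inv_mul_cancel₀ hR1.ne', one_smul]
  have keyA : ∀ κ : ℝ, 0 < κ → B - κ • A ∉ closure K := by
    intro κ hκ hcl
    -- a small multiplicative decrease of the gauge `m1` would still be admissible
    set δ := κ * (R - 1) / (1 + κ * R) with hδ
    have hδ0 : 0 < δ := by positivity
    have e1 : δ + δ * κ * R = κ * (R - 1) := by rw [hδ]; field_simp
    have h1 : (1 - δ) * m1 < m1 := by nlinarith
    refine absurd ((h.gauge_le hY (x := X) (c := (1 - δ) * m1)).1 ?_) (not_le.2 h1)
    rw [mul_smul, eY, eX]
    have h2 := h.smul_cl hcl (r := δ / κ) (by positivity)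
    rw [show (δ / κ) • (B - κ • A) = (1 - δ) • (A + R • B) - (A + B) by
      have e2 : δ / κ = (1 - δ) * R - 1 := by
        rw [div_eq_iff hκ.ne']; linarith
      rw [show (δ / κ) • (B - κ • A) = (δ / κ) • B - (δ / κ * κ) • A by module,
        div_mul_cancel₀ _ hκ.ne', e2]
      module] at h2
    exact h2
  have keyB : ∀ κ : ℝ, 0 < κ → A - κ • B ∉ closure K := by
    intro κ hκ hcl
    set δ := κ * (R - 1) / (R + κ * R) with hδ
    have hδ0 : 0 < δ := by positivity
    have e1 : δ * R + δ * κ * R = κ * (R - 1) := by rw [hδ]; field_simp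
    have h1 : (1 - δ) * m2 < m2 := by nlinarith
    refine absurd ((h.gauge_le hX (x := Y) (c := (1 - δ) * m2)).1 ?_) (not_le.2 h1)
    have h2 := h.smul_cl hcl (r := δ * R / κ / m1) (by positivity)
    rw [show (δ * R / κ / m1) • (A - κ • B) = ((1 - δ) * m2) • X - Y by
      have e2 : δ * R / κ = (1 - δ) * R - 1 := by
        rw [div_eq_iff hκ.ne']; linarith
      have e3 : Y = m1⁻¹ • (A + R • B) := by
        rw [← eY, smul_smul, inv_mul_cancel₀ p1.ne', one_smul]
      have e4 : m2 = m1⁻¹ * R := by rw [← hR']; field_simp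
      rw [e3, e4, eX, show (δ * R / κ / m1) • (A - κ • B) =
        m1⁻¹ • ((δ * R / κ) • A - (δ * R / κ * κ) • B) by module,
        div_mul_cancel₀ _ hκ.ne', e2]
      module] at h2
    exact h2
  refine ⟨A, B, ?_, eX, m1⁻¹, by positivity, ?_⟩
  · intro a b
    constructor
    · intro hab
      by_contra hneg
      rw [not_and_or, not_le, not_le] at hneg
      rcases hneg with ha | hb
      · have hp : 0 < |b| + 1 := by positivity
        refine keyA (-a / (|b| + 1)) (div_pos (by linarith) hp) ?_
        have h1 := h.add_cl hab (h.smul_cl clB (r := |b| + 1 - b) (by linarith [le_abs_self b]))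
        have h2 := h.smul_cl h1 (r := (|b| + 1)⁻¹) (by positivity)
        rwa [show (|b| + 1)⁻¹ • (a • A + b • B + (|b| + 1 - b) • B)
          = ((|b| + 1)⁻¹ * (|b| + 1)) • B - (-a / (|b| + 1)) • A by module,
          inv_mul_cancel₀ hp.ne', one_smul] at h2
      · have hp : 0 < |a| + 1 := by positivity
        refine keyB (-b / (|a| + 1)) (div_pos (by linarith) hp) ?_
        have h1 := h.add_cl hab (h.smul_cl clA (r := |a| + 1 - a) (by linarith [le_abs_self a]))
        have h2 := h.smul_cl h1 (r := (|a| + 1)⁻¹) (by positivity)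
        rwa [show (|a| + 1)⁻¹ • (a • A + b • B + (|a| + 1 - a) • A)
          = ((|a| + 1)⁻¹ * (|a| + 1)) • A - (-b / (|a| + 1)) • B by module,
          inv_mul_cancel₀ hp.ne', one_smul] at h2
    · rintro ⟨ha, hb⟩
      exact h.add_cl (h.smul_cl clA ha) (h.smul_cl clB hb)
  · rw [← eY, smul_smul, inv_mul_cancel₀ p1.ne', one_smul]

/-- The linear flow `P + r (1 - P)`, with multiplicative parameter `r > 0`. -/
def fl (P : E →ₗ[ℝ] E) (r : ℝ) (X : E) : E := P X + r • (X - P X)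

/-- `P` is a projection that splits `K` as a direct sum of two nontrivial cones; this is
expressed by invariance of `K` under the flow `P + r (1 - P)`. -/
structure IsJoin (K : Set E) (P : E →ₗ[ℝ] E) : Prop where
  idem : ∀ X, P (P X) = P X
  flow : ∀ X ∈ K, ∀ r : ℝ, 0 < r → fl P r X ∈ K
  left_ne : ∀ X ∈ K, P X ≠ 0
  right_ne : ∀ X ∈ K, X - P X ≠ 0

/-- A splitting of `K` whose first summand is a ray. -/
def IsVertex (K : Set E) (P : E →ₗ[ℝ] E) : Prop :=
  IsJoin K P ∧ ∃ (l : E →ₗ[ℝ] ℝ) (v : E), (∀ X, P X = l X • v) ∧ ∀ X ∈ K, 0 < l X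

namespace IsJoin

variable {K : Set E} {P : E →ₗ[ℝ] E}

theorem fl_one (X : E) : fl P 1 X = X := by simp [fl]

theorem fl_smul (r s : ℝ) (X : E) : fl P r (s • X) = s • fl P r X := by
  simp only [fl, map_smul]; module

theorem P_fl (hj : IsJoin K P) (r : ℝ) (X : E) : P (fl P r X) = P X := by
  simp [fl, hj.idem]

theorem Q_fl (hj : IsJoin K P) (r : ℝ) (X : E) : fl P r X - P (fl P r X) = r • (X - P X) := by
  rw [hj.P_fl]; simp [fl]

theorem fl_fl (hj : IsJoin K P) (r s : ℝ) (X : E) : fl P r (fl P s X) = fl P (r * s) X := by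
  rw [fl, hj.Q_fl, hj.P_fl, fl, smul_smul]

theorem fl_cl (hj : IsJoin K P) (h : PCone K)
    {X : E} (hX : X ∈ closure K) {r : ℝ} (hr : 0 < r) : fl P r X ∈ closure K := by
  have hP : Continuous P := P.continuous_of_finiteDimensional
  have hc : Continuous (fl P r) := by unfold fl; fun_prop
  exact map_mem_closure hc hX fun Z hZ => hj.flow Z hZ r hr

theorem left_cl (hj : IsJoin K P) (h : PCone K) {X : E} (hX : X ∈ closure K) : P X ∈ closure K :=
  PCone.cl_of_forall (b := X - P X) fun _ hε _ => hj.fl_cl h hX hε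

theorem right_cl (hj : IsJoin K P) (h : PCone K)
    {X : E} (hX : X ∈ closure K) : X - P X ∈ closure K := by
  refine PCone.cl_of_forall (b := P X) fun ε hε _ => ?_
  have := h.smul_cl (hj.fl_cl h hX (inv_pos.2 hε)) hε.le
  rwa [fl, smul_add, smul_smul, mul_inv_cancel₀ hε.ne', one_smul, add_comm] at this

theorem bpair (hj : IsJoin K P) (h : PCone K) {X : E} (hX : X ∈ K) : BPair K (P X) (X - P X) := by
  have c1 := hj.left_cl h (subset_closure hX)
  have c2 := hj.right_cl h (subset_closure hX)
  intro a b
  constructor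
  · intro hab
    have e1 : P (a • P X + b • (X - P X)) = a • P X := by simp [hj.idem]
    constructor
    · have := hj.left_cl h hab
      rw [e1] at this
      exact h.nonneg_of_smul_cl c1 (hj.left_ne X hX) this
    · have := hj.right_cl h hab
      rw [e1, add_sub_cancel_left] at this
      exact h.nonneg_of_smul_cl c2 (hj.right_ne X hX) this
  · rintro ⟨ha, hb⟩
    exact h.add_cl (h.smul_cl c1 ha) (h.smul_cl c2 hb)

theorem hN_fl (hj : IsJoin K P) (h : PCone K)
    {X : E} (hX : X ∈ K) {ρ σ : ℝ} (hρ : 0 < ρ) (hσ : 0 < σ) :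
    hN K (fl P ρ X) (fl P σ X) = max (ρ / σ) (σ / ρ) :=
  (hj.bpair h hX).hN_line h hρ hσ

theorem hN_fl_one (hj : IsJoin K P) (h : PCone K) {X : E} (hX : X ∈ K) {σ : ℝ} (hσ : 0 < σ) :
    hN K X (fl P σ X) = max σ⁻¹ σ := by
  have := hj.hN_fl h hX one_pos hσ
  rwa [fl_one, one_div, div_one] at this

theorem left_ex (hj : IsJoin K P) (h : PCone K)
    {X Y : E} (hY : Y ∈ K) : ∃ c : ℝ, c • P Y - P X ∈ closure K := by
  obtain ⟨c, hc⟩ := h.exists_le hY X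
  exact ⟨c, by simpa using hj.left_cl h hc⟩

theorem right_ex (hj : IsJoin K P) (h : PCone K) {X Y : E} (hY : Y ∈ K) :
    ∃ c : ℝ, c • (Y - P Y) - (X - P X) ∈ closure K := by
  obtain ⟨c, hc⟩ := h.exists_le hY X
  refine ⟨c, ?_⟩
  have := hj.right_cl h hc
  rwa [map_sub, map_smul, show c • Y - X - (c • P Y - P X) = c • (Y - P Y) - (X - P X) by
    module] at this

theorem sub_cl_iff (hj : IsJoin K P) (h : PCone K)
    {Z : E} : Z ∈ closure K ↔ P Z ∈ closure K ∧ Z - P Z ∈ closure K := by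
  constructor
  · exact fun hZ => ⟨hj.left_cl h hZ, hj.right_cl h hZ⟩
  · rintro ⟨h1, h2⟩
    simpa using h.add_cl h1 h2

/-- The gauge of a direct sum of cones is the maximum of the gauges of the summands. -/
theorem gauge_max (hj : IsJoin K P) (h : PCone K) {X Y : E} (hY : Y ∈ K) :
    coneGauge K X Y =
      max (coneGauge K (P X) (P Y)) (coneGauge K (X - P X) (Y - P Y)) := by
  apply h.gauge_eq (subset_closure hY) (h.ne_zero hY)
  intro c
  rw [hj.sub_cl_iff h, max_le_iff,
    ← h.gauge_le_iff (hj.left_cl h (subset_closure hY)) (hj.left_ne Y hY) (hj.left_ex h hY),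
    ← h.gauge_le_iff (hj.right_cl h (subset_closure hY)) (hj.right_ne Y hY) (hj.right_ex h hY),
    map_sub, map_smul, show c • Y - X - (c • P Y - P X) = c • (Y - P Y) - (X - P X) by
    module]

theorem hN_fl_right (hj : IsJoin K P) (h : PCone K)
    {X Y : E} (hX : X ∈ K) (hY : Y ∈ K) {r : ℝ} (hr : 0 < r) :
    hN K X (fl P r Y) =
      max (coneGauge K (P X) (P Y)) (r⁻¹ * coneGauge K (X - P X) (Y - P Y)) *
      max (coneGauge K (P Y) (P X)) (r * coneGauge K (Y - P Y) (X - P X)) := by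
  unfold hN
  rw [hj.gauge_max h (hj.flow Y hY r hr), hj.gauge_max h hX, hj.Q_fl, hj.P_fl]
  have e1 := h.gauge_smul (hj.right_cl h (subset_closure hY)) (hj.right_ne Y hY)
    (hj.right_ex h (X := X) hY) one_pos hr
  have e2 := h.gauge_smul (hj.right_cl h (subset_closure hX)) (hj.right_ne X hX)
    (hj.right_ex h (X := Y) hX) hr one_pos
  rw [one_smul, one_div] at e1
  rw [one_smul, div_one] at e2
  rw [e1, e2]

theorem left_pos (hj : IsJoin K P) (h : PCone K)
    {X Y : E} (hX : X ∈ K) (hY : Y ∈ K) : 0 < coneGauge K (P X) (P Y) :=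
  h.gauge_pos (hj.left_cl h (subset_closure hY)) (hj.left_ne Y hY)
    (hj.left_cl h (subset_closure hX)) (hj.left_ne X hX) (hj.left_ex h hY)

theorem right_pos (hj : IsJoin K P) (h : PCone K) {X Y : E} (hX : X ∈ K) (hY : Y ∈ K) :
    0 < coneGauge K (X - P X) (Y - P Y) :=
  h.gauge_pos (hj.right_cl h (subset_closure hY)) (hj.right_ne Y hY)
    (hj.right_cl h (subset_closure hX)) (hj.right_ne X hX) (hj.right_ex h hY)

/-- The asymptotics of the metric along the flow: `hN X (fl r Y)` is eventually linear in `r`. -/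
theorem hN_large (hj : IsJoin K P) (h : PCone K)
    {X Y : E} (hX : X ∈ K) (hY : Y ∈ K) : ∃ r0 : ℝ, 0 < r0 ∧ ∀ r, r0 ≤ r →
    hN K X (fl P r Y) =
      r * (coneGauge K (P X) (P Y) * coneGauge K (Y - P Y) (X - P X)) := by
  have p1 := hj.left_pos h hX hY
  have p2 := hj.left_pos h hY hX
  have p3 := hj.right_pos h hX hY
  have p4 := hj.right_pos h hY hX
  set a := coneGauge K (P X) (P Y)
  set b := coneGauge K (P Y) (P X)
  set c := coneGauge K (X - P X) (Y - P Y)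
  set e := coneGauge K (Y - P Y) (X - P X)
  refine ⟨c / a + b / e, by positivity, fun r hr => ?_⟩
  have hr0 : 0 < r := lt_of_lt_of_le (by positivity) hr
  have q1 : c / a ≤ r := le_trans (by have : 0 < b / e := by positivity
                                      linarith) hr
  have q2 : b / e ≤ r := le_trans (by have : 0 < c / a := by positivity
                                      linarith) hr
  rw [hj.hN_fl_right h hX hY hr0, max_eq_left, max_eq_right]
  · ring
  · rwa [div_le_iff₀ p4] at q2
  · rw [div_le_iff₀ p1] at q1
    rw [inv_mul_le_iff₀ hr0]; exact q1

/-- The counterpart of `hN_large` at the other end of the flow. -/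
theorem hN_small (hj : IsJoin K P) (h : PCone K)
    {X Y : E} (hX : X ∈ K) (hY : Y ∈ K) : ∃ r0 : ℝ, 0 < r0 ∧ ∀ r, 0 < r → r ≤ r0 →
    hN K X (fl P r Y) =
      r⁻¹ * (coneGauge K (X - P X) (Y - P Y) * coneGauge K (P Y) (P X)) := by
  have p1 := hj.left_pos h hX hY
  have p2 := hj.left_pos h hY hX
  have p3 := hj.right_pos h hX hY
  have p4 := hj.right_pos h hY hX
  set a := coneGauge K (P X) (P Y)
  set b := coneGauge K (P Y) (P X)
  set c := coneGauge K (X - P X) (Y - P Y)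
  set e := coneGauge K (Y - P Y) (X - P X)
  refine ⟨min (c / a) (b / e), by positivity, fun r hr0 hr => ?_⟩
  have q1 : r ≤ c / a := hr.trans (min_le_left _ _)
  have q2 : r ≤ b / e := hr.trans (min_le_right _ _)
  rw [hj.hN_fl_right h hX hY hr0, max_eq_right, max_eq_left]
  · ring
  · rwa [le_div_iff₀ p4] at q2
  · rw [le_div_iff₀ p1] at q1
    rw [le_inv_mul_iff₀ hr0]; exact q1

/-- Mixing the two components of points of `K` stays in `K`. -/
theorem mix_mem (hj : IsJoin K P) (h : PCone K)
    {Y Z : E} (hY : Y ∈ K) (hZ : Z ∈ K) : P Y + (Z - P Z) ∈ K := by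
  obtain ⟨ε, hε, hm⟩ := h.exists_sub_mem hZ Y
  have h1 := hj.right_cl h (subset_closure hm)
  have h2 := h.add_mem_cl (hj.flow Y hY ε hε) h1
  rwa [fl, map_sub, map_smul, show P Y + ε • (Y - P Y) + (Z - ε • Y - (P Z - ε • P Y))
    = P Y + (Z - P Z) by module] at h2

/-- Interchanging the summands. -/
theorem swap (hj : IsJoin K P) (h : PCone K) : IsJoin K (LinearMap.id - P) where
  idem X := by simp [hj.idem]
  flow X hX r hr := by
    have := h.smul_mem _ (hj.flow X hX r⁻¹ (by positivity)) r hr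
    rw [fl, smul_add, smul_smul, mul_inv_cancel₀ hr.ne', one_smul] at this
    simpa [fl, add_comm] using this
  left_ne X hX := by simpa using hj.right_ne X hX
  right_ne X hX := by simpa using hj.left_ne X hX

end IsJoin

/-- Up to scaling, exchanging the summands reverses the flow. -/
theorem fl_swap (P : E →ₗ[ℝ] E) {r : ℝ} (hr : 0 < r) (X : E) :
    fl P r X = r • fl (LinearMap.id - P) r⁻¹ X := by
  simp only [fl, LinearMap.sub_apply, LinearMap.id_apply, smul_add, smul_smul,
    mul_inv_cancel₀ hr.ne', one_smul]
  module

/-- In the geometry of a cone with a vertex, the flow lines through the vertex are the only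
geodesics between their points. -/
theorem IsVertex.rigid {K : Set E} {P : E →ₗ[ℝ] E} (hv : IsVertex K P) (h : PCone K) {X Z : E}
    (hX : X ∈ K) (hZ : Z ∈ K) {R : ℝ} (hR : 0 < R)
    (hle : hN K X Z * hN K Z (fl P R X) ≤ R) :
    ∃ σ : ℝ, 0 < σ ∧ ∃ s : ℝ, 0 < s ∧ Z = s • fl P σ X := by
  obtain ⟨hj, l, v, hl, hlpos⟩ := hv
  have hF := hj.flow X hX R hR
  have pX := hlpos X hX
  have pZ := hlpos Z hZ
  have hv0 : v ≠ 0 := by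
    rintro rfl
    exact hj.left_ne X hX (by rw [hl, smul_zero])
  have hvcl : v ∈ closure K := by
    have := h.smul_cl (hj.left_cl h (subset_closure hX)) (r := (l X)⁻¹) (by positivity)
    rwa [hl, smul_smul, inv_mul_cancel₀ pX.ne', one_smul] at this
  set α := coneGauge K X Z with hα
  set β := coneGauge K Z X with hβ
  set γ := coneGauge K Z (fl P R X) with hγ
  set δ := coneGauge K (fl P R X) Z with hδ
  have pα : 0 < α := h.gauge_pos' hX hZ
  have pβ : 0 < β := h.gauge_pos' hZ hX
  have pγ : 0 < γ := h.gauge_pos' hZ hF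
  have pδ : 0 < δ := h.gauge_pos' hF hZ
  have hle' : (α * β) * (γ * δ) ≤ R := hle
  have e1 : l X ≤ α * l Z := by
    have := hj.left_cl h ((h.gauge_le hZ (x := X)).2 le_rfl)
    rw [map_sub, map_smul, hl, hl, smul_smul, ← sub_smul] at this
    linarith [h.nonneg_of_smul_cl hvcl hv0 this]
  have e2 : l Z ≤ γ * l X := by
    have := hj.left_cl h ((h.gauge_le hF (x := Z)).2 le_rfl)
    rw [map_sub, map_smul, hj.P_fl, hl, hl, smul_smul, ← sub_smul] at this
    linarith [h.nonneg_of_smul_cl hvcl hv0 this]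
  have e3 : β • (X - P X) - (Z - P Z) ∈ closure K := by
    have := hj.right_cl h ((h.gauge_le hX (x := Z)).2 le_rfl)
    rwa [map_sub, map_smul, show coneGauge K Z X • X - Z - (coneGauge K Z X • P X - P Z)
      = β • (X - P X) - (Z - P Z) by rw [hβ]; module] at this
  have e4 : δ • (Z - P Z) - R • (X - P X) ∈ closure K := by
    have := hj.right_cl h ((h.gauge_le hZ (x := fl P R X)).2 le_rfl)
    rw [map_sub, map_smul, ← hδ, show δ • Z - fl P R X - (δ • P Z - P (fl P R X))
      = δ • (Z - P Z) - (fl P R X - P (fl P R X)) by module, hj.Q_fl] at this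
    exact this
  have e5 : 1 ≤ α * γ := by
    have : l X ≤ (α * γ) * l X := by nlinarith
    nlinarith
  have e6 : δ * β ≤ R := by
    have : 0 < β * δ := by positivity
    nlinarith
  have e7 : R • (X - P X) - δ • (Z - P Z) ∈ closure K := by
    have h1 := h.smul_cl e3 pδ.le
    have h2 := h.smul_cl (hj.right_cl h (subset_closure hX)) (r := R - δ * β) (by linarith)
    have := h.add_cl h1 h2
    rwa [show δ • (β • (X - P X) - (Z - P Z)) + (R - δ * β) • (X - P X)
      = R • (X - P X) - δ • (Z - P Z) by module] at this
  have e8 := h.eq_of_cl e4 e7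
  have hQ : Z - P Z = (R / δ) • (X - P X) := by
    have := congrArg (fun w => δ⁻¹ • w) e8
    simp only [smul_smul, inv_mul_cancel₀ pδ.ne', one_smul] at this
    rw [this]; congr 1; field_simp
  refine ⟨(R / δ) / (l Z / l X), by positivity, l Z / l X, by positivity, ?_⟩
  rw [fl, smul_add, smul_smul, mul_div_cancel₀ _ (by positivity), ← hQ, hl, hl, smul_smul,
    div_mul_cancel₀ _ pX.ne']
  module

/-! ### Isometries and the image of the vertex flow -/

/-- An isometry of the Hilbert geometries of `K` and `K'`, lifted to a positively homogeneous
map of the cones. -/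
structure ProjIso (K K' : Set E) (T : E → E) : Prop where
  maps : ∀ X ∈ K, T X ∈ K'
  surj : ∀ Y ∈ K', ∃ X ∈ K, T X = Y
  hom : ∀ X ∈ K, ∀ r : ℝ, 0 < r → T (r • X) = r • T X
  iso : ∀ X ∈ K, ∀ Y ∈ K, hN K' (T X) (T Y) = hN K X Y

namespace ProjIso

variable {K K' : Set E} {T : E → E}

theorem injOn (hT : ProjIso K K' T) (h : PCone K) (h' : PCone K')
    {X Y : E} (hX : X ∈ K) (hY : Y ∈ K) (he : T X = T Y) : X = Y := by
  have h1 : hN K X Y ≤ 1 := by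
    rw [← hT.iso X hX Y hY, he, hN, h'.gauge_self (hT.maps Y hY)]; norm_num
  obtain ⟨s, hs, hXY⟩ := h.eq_of_hN hX hY h1
  have h2 : T X = s • T Y := by rw [hXY, hT.hom Y hY s hs]
  have h3 : (s - 1) • T Y = 0 := by rw [sub_smul, one_smul, ← h2, he, sub_self]
  have h4 := (smul_eq_zero.1 h3).resolve_right (h'.ne_zero (hT.maps Y hY))
  rw [hXY, show s = 1 by linarith, one_smul]

theorem exists_symm (hT : ProjIso K K' T) (h : PCone K) (h' : PCone K')
    : ∃ S : E → E, ProjIso K' K S ∧ (∀ X ∈ K, S (T X) = X) ∧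
    ∀ Y ∈ K', T (S Y) = Y := by
  choose! S hS1 hS2 using hT.surj
  refine ⟨S, ⟨hS1, ?_, ?_, ?_⟩, ?_, hS2⟩
  · intro X hX
    exact ⟨T X, hT.maps X hX,
      hT.injOn h h' (hS1 _ (hT.maps X hX)) hX (hS2 _ (hT.maps X hX))⟩
  · intro Y hY r hr
    apply hT.injOn h h' (hS1 _ (h'.smul_mem Y hY r hr)) (h.smul_mem _ (hS1 Y hY) r hr)
    rw [hS2 _ (h'.smul_mem Y hY r hr), hT.hom _ (hS1 Y hY) r hr, hS2 Y hY]
  · intro X hX Y hY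
    rw [← hT.iso _ (hS1 X hX) _ (hS1 Y hY), hS2 X hX, hS2 Y hY]
  · intro X hX
    exact hT.injOn h h' (hS1 _ (hT.maps X hX)) hX (hS2 _ (hT.maps X hX))

theorem comp (hT : ProjIso K K' T) {K'' : Set E} {S : E → E} (hS : ProjIso K' K'' S) :
    ProjIso K K'' (fun X => S (T X)) where
  maps X hX := hS.maps _ (hT.maps X hX)
  surj Z hZ := by
    obtain ⟨Y, hY, rfl⟩ := hS.surj Z hZ
    obtain ⟨X, hX, rfl⟩ := hT.surj Y hY
    exact ⟨X, hX, rfl⟩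
  hom X hX r hr := by rw [hT.hom X hX r hr, hS.hom _ (hT.maps X hX) r hr]
  iso X hX Y hY := by
    rw [hS.iso _ (hT.maps X hX) _ (hT.maps Y hY), hT.iso X hX Y hY]

/-- The image of a bounded piece of a vertex line is a straight segment. -/
theorem orbit_aux (hT : ProjIso K K' T) (h : PCone K) (h' : PCone K')
    {P : E →ₗ[ℝ] E} (hv : IsVertex K P) {X : E} (hX : X ∈ K) {R : ℝ} (hR : 1 < R) :
    ∃ A B : E, BPair K' A B ∧ T X = A + B ∧
      ∀ ρ : ℝ, 1 ≤ ρ → ρ ≤ R → ∃ s : ℝ, 0 < s ∧ T (fl P ρ X) = s • (A + ρ • B) := by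
  have hj := hv.1
  have R0 : 0 < R := by linarith
  have hF := hj.flow X hX R R0
  have hNR : hN K' (T X) (T (fl P R X)) = R := by
    rw [hT.iso X hX _ hF, hj.hN_fl_one h hX R0]
    exact max_eq_right ((inv_le_one_of_one_le₀ hR.le).trans hR.le)
  obtain ⟨A, B, hb, eX, s0, hs0, eY⟩ := exists_bpair h' (hT.maps X hX) (hT.maps _ hF) hR hNR
  refine ⟨A, B, hb, eX, fun ρ h1 h2 => ?_⟩
  have ρ0 : 0 < ρ := by linarith
  have mem : ∀ ρ : ℝ, 1 ≤ ρ → A + ρ • B ∈ K' := by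
    intro ρ h1
    have := h'.add_mem_cl (hT.maps X hX) (h'.smul_cl hb.right_cl (r := ρ - 1) (by linarith))
    rwa [eX, show A + B + (ρ - 1) • B = A + ρ • B by module] at this
  obtain ⟨Z, hZ, hTZ⟩ := hT.surj _ (mem ρ h1)
  have n1 : hN K X Z = ρ := by
    rw [← hT.iso X hX Z hZ, hTZ, eX]
    have := hb.hN_line h' one_pos ρ0
    rw [one_smul, one_div, div_one] at this
    rw [this]
    exact max_eq_right ((inv_le_one_of_one_le₀ h1).trans h1)
  have n2 : hN K Z (fl P R X) = R / ρ := by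
    rw [← hT.iso Z hZ _ hF, hTZ, eY]
    have := h'.hN_smul (mem ρ h1) (mem R hR.le) one_pos hs0
    rw [one_smul] at this
    rw [this, hb.hN_line h' ρ0 R0]
    exact max_eq_right (((div_le_one R0).2 h2).trans ((one_le_div ρ0).2 h2))
  obtain ⟨σ, hσ, s, hs, hZe⟩ := hv.rigid h hX hZ R0 (by
    rw [n1, n2, mul_div_cancel₀ _ ρ0.ne'])
  have hσF := hj.flow X hX σ hσ
  have n3 : max σ⁻¹ σ = ρ := by
    rw [← n1, hZe, ← hj.hN_fl_one h hX hσ]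
    have := h.hN_smul hX hσF one_pos hs
    rw [one_smul] at this
    exact this.symm
  have n4 : max (σ / R) (R / σ) = R / ρ := by
    rw [← n2, hZe, ← hj.hN_fl h hX hσ R0]
    have := h.hN_smul hσF hF hs one_pos
    rw [one_smul] at this
    exact this.symm
  have hσρ : σ = ρ := by
    rcases le_total 1 σ with hσ1 | hσ1
    · rwa [max_eq_right ((inv_le_one_of_one_le₀ hσ1).trans hσ1)] at n3
    · have h3 : R / σ ≤ R / ρ := n4 ▸ le_max_right _ _
      have h4 : ρ ≤ σ := (div_le_div_iff_of_pos_left R0 hσ ρ0).1 h3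
      linarith
  refine ⟨s⁻¹, by positivity, ?_⟩
  rw [← hTZ, hZe, hσρ, hT.hom _ (hj.flow X hX ρ ρ0) s hs, smul_smul, inv_mul_cancel₀ hs.ne',
    one_smul]

/-- The image of a vertex line is a full straight line, with its parameter. -/
theorem orbit (hT : ProjIso K K' T) (h : PCone K) (h' : PCone K')
    {P : E →ₗ[ℝ] E} (hv : IsVertex K P) {X : E} (hX : X ∈ K) :
    ∃ A B : E, BPair K' A B ∧ T X = A + B ∧
      ∀ r : ℝ, 0 < r → ∃ s : ℝ, 0 < s ∧ T (fl P r X) = s • (A + r • B) := by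
  have hj := hv.1
  have loc : ∀ r0 R : ℝ, 0 < r0 → r0 < 1 → 1 < R → ∃ A B : E, BPair K' A B ∧ T X = A + B ∧
      ∀ r : ℝ, r0 ≤ r → r ≤ R → ∃ s : ℝ, 0 < s ∧ T (fl P r X) = s • (A + r • B) := by
    intro r0 R h0 h1 hR
    obtain ⟨A, B, hb, -, hfl⟩ := hT.orbit_aux h h' hv (hj.flow X hX r0 h0) (R := R / r0)
      ((one_lt_div h0).2 (h1.trans hR))
    have hfl' : ∀ r : ℝ, r0 ≤ r → r ≤ R →
        ∃ s : ℝ, 0 < s ∧ T (fl P r X) = s • (A + (r / r0) • B) := by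
      intro r hr hr'
      obtain ⟨s, hs, he⟩ := hfl (r / r0) ((one_le_div h0).2 hr)
        ((div_le_div_iff_of_pos_right h0).2 hr')
      rw [hj.fl_fl, div_mul_cancel₀ _ h0.ne'] at he
      exact ⟨s, hs, he⟩
    obtain ⟨s1, hs1, he1⟩ := hfl' 1 h1.le hR.le
    rw [IsJoin.fl_one] at he1
    refine ⟨s1 • A, (s1 / r0) • B, hb.smul hs1 (by positivity), ?_, ?_⟩
    · rw [he1]; module
    · intro r hr hr'
      obtain ⟨s, hs, he⟩ := hfl' r hr hr'
      refine ⟨s / s1, by positivity, ?_⟩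
      rw [he, show (s / s1) • (s1 • A + r • (s1 / r0) • B) =
        (s / s1 * s1) • (A + (r / r0) • B) by module, div_mul_cancel₀ _ hs1.ne']
  obtain ⟨A, B, hb, eX, hfl⟩ := loc (1/2) 2 (by norm_num) (by norm_num) (by norm_num)
  refine ⟨A, B, hb, eX, fun r hr => ?_⟩
  obtain ⟨A', B', hb', eX', hfl'⟩ := loc (min r (1/2)) (max r 2) (by positivity)
    (lt_of_le_of_lt (min_le_right _ _) (by norm_num))
    (lt_of_lt_of_le (by norm_num) (le_max_right _ _))
  obtain ⟨s, hs, he⟩ := hfl 2 (by norm_num) le_rfl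
  obtain ⟨s', hs', he'⟩ := hfl' 2 ((min_le_right _ _).trans (by norm_num)) (le_max_right _ _)
  have h2 : A + (2:ℝ) • B = (s⁻¹ * s') • (A' + (2:ℝ) • B') := by
    rw [mul_smul, ← he', he, smul_smul, inv_mul_cancel₀ hs.ne', one_smul]
  obtain ⟨rfl, rfl⟩ := hb.unique hb' (eX.symm.trans eX') h2
  exact hfl' r (min_le_left _ _) (le_max_left _ _)

end ProjIso

/-- Rays at bounded Hilbert distance end in the same face: the limit `U` is dominated by `U'`. -/
theorem dominated_of_bounded {K : Set E} (h : PCone K) {U W U' W' : E} {D : ℝ}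
    (hU' : U' ∈ closure K) (hU'0 : U' ≠ 0) (hW : W ∈ closure K) (hW' : W' ∈ closure K)
    (hin : ∀ ε : ℝ, 0 < ε → U + ε • W ∈ K) (hin' : ∀ ε : ℝ, 0 < ε → U' + ε • W' ∈ K)
    (hD : ∀ ε : ℝ, 0 < ε → hN K (U + ε • W) (U' + ε • W') = D) :
    ∃ c : ℝ, 0 ≤ c ∧ c • U' - U ∈ closure K := by
  have hX : U + W ∈ K := by simpa using hin 1 one_pos
  have hD0 : 0 < D := by
    have h1 := h.one_le_hN' (hin 1 one_pos) (hin' 1 one_pos)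
    rw [hD 1 one_pos] at h1; linarith
  have hex := h.exists_le hX U'
  have pm := h.gauge_pos (subset_closure hX) (h.ne_zero hX) hU' hU'0 hex
  set μ := coneGauge K U' (U + W) with hμ
  refine ⟨D / μ, by positivity, ?_⟩
  refine PCone.cl_of_forall (b := (D / μ) • W' - W) fun ε hε hε1 => ?_
  have k1 := hin ε hε
  have k2 := hin' ε hε
  set l1 := coneGauge K (U + ε • W) (U' + ε • W') with hl1
  set l2 := coneGauge K (U' + ε • W') (U + ε • W) with hl2
  have p1 : 0 < l1 := h.gauge_pos' k1 k2
  have p2 : 0 < l2 := h.gauge_pos' k2 k1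
  have hll : l1 * l2 = D := hD ε hε
  have c1 : l1 • (U' + ε • W') - (U + ε • W) ∈ closure K := (h.gauge_le k2).2 le_rfl
  have c2 : l2 • (U + ε • W) - (U' + ε • W') ∈ closure K := (h.gauge_le k1).2 le_rfl
  have c3 : l2 • (U + W) - U' ∈ closure K := by
    have := h.add_cl (h.add_cl c2 (h.smul_cl hW' hε.le))
      (h.smul_cl hW (r := l2 * (1 - ε)) (mul_nonneg p2.le (by linarith)))
    rwa [show l2 • (U + ε • W) - (U' + ε • W') + ε • W' + (l2 * (1 - ε)) • W
      = l2 • (U + W) - U' by module] at this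
  have c4 : μ ≤ l2 := (h.gauge_le hX).1 c3
  have c5 : l1 ≤ D / μ := by
    rw [le_div_iff₀ pm, ← hll]
    exact mul_le_mul_of_nonneg_left c4 p1.le
  have := h.add_cl c1 (h.smul_cl (subset_closure k2) (sub_nonneg.2 c5))
  rwa [show l1 • (U' + ε • W') - (U + ε • W) + (D / μ - l1) • (U' + ε • W')
    = (D / μ) • U' - U + ε • ((D / μ) • W' - W) by module] at this

/-- The linear span of the face of the closed cone generated by `A`. -/
def faceSpan {K : Set E} (h : PCone K) (A : E) (_hA : A ∈ closure K) : Submodule ℝ E where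
  carrier := {U | ∃ c : ℝ, 0 ≤ c ∧ c • A + U ∈ closure K ∧ c • A - U ∈ closure K}
  zero_mem' := ⟨0, le_rfl, by simpa using h.zero_cl, by simpa using h.zero_cl⟩
  add_mem' := by
    rintro U W ⟨c, hc, h1, h2⟩ ⟨d, hd, h3, h4⟩
    refine ⟨c + d, by positivity, ?_, ?_⟩
    · rw [show (c + d) • A + (U + W) = (c • A + U) + (d • A + W) by module]
      exact h.add_cl h1 h3
    · rw [show (c + d) • A - (U + W) = (c • A - U) + (d • A - W) by module]
      exact h.add_cl h2 h4
  smul_mem' := by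
    rintro t U ⟨c, hc, h1, h2⟩
    refine ⟨|t| * c, by positivity, ?_⟩
    rcases le_total 0 t with ht | ht
    · rw [abs_of_nonneg ht, show (t * c) • A + t • U = t • (c • A + U) by module,
        show (t * c) • A - t • U = t • (c • A - U) by module]
      exact ⟨h.smul_cl h1 ht, h.smul_cl h2 ht⟩
    · rw [abs_of_nonpos ht, show (-t * c) • A + t • U = (-t) • (c • A - U) by module,
        show (-t * c) • A - t • U = (-t) • (c • A + U) by module]
      exact ⟨h.smul_cl h2 (by linarith), h.smul_cl h1 (by linarith)⟩

theorem mem_faceSpan_of_le {K : Set E} (h : PCone K) {A U : E} (hA : A ∈ closure K)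
    (hU : U ∈ closure K) {c : ℝ} (hc0 : 0 ≤ c) (hc : c • A - U ∈ closure K) :
    U ∈ faceSpan h A hA :=
  ⟨c, hc0, h.add_cl (h.smul_cl hA hc0) hU, hc⟩

namespace ProjIso

variable {K K' : Set E} {T : E → E}

/-- The vertex flow of `K` is carried to the linear flow of a splitting of `K'`. -/
theorem exists_join (hT : ProjIso K K' T) (h : PCone K) (h' : PCone K')
    {P : E →ₗ[ℝ] E} (hv : IsVertex K P) :
    ∃ P' : E →ₗ[ℝ] E, IsJoin K' P' ∧
      ∀ X ∈ K, ∀ r : ℝ, 0 < r → ∃ s : ℝ, 0 < s ∧ T (fl P r X) = s • fl P' r (T X) := by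
  have hj := hv.1
  have horb := fun X (hX : X ∈ K) => hT.orbit h h' hv hX
  choose! A B hb eX hfl using horb
  have mem : ∀ X ∈ K, ∀ r : ℝ, 0 < r → A X + r • B X ∈ K' := by
    intro X hX r hr
    obtain ⟨s, hs, he⟩ := hfl X hX r hr
    have := h'.smul_mem _ (hT.maps _ (hj.flow X hX r hr)) s⁻¹ (by positivity)
    rwa [he, smul_smul, inv_mul_cancel₀ hs.ne', one_smul] at this
  have mem' : ∀ X ∈ K, ∀ r : ℝ, 0 < r → B X + r • A X ∈ K' := by
    intro X hX r hr
    have := h'.smul_mem _ (mem X hX r⁻¹ (by positivity)) r hr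
    rwa [smul_add, smul_smul, mul_inv_cancel₀ hr.ne', one_smul, add_comm] at this
  have hdist : ∀ X ∈ K, ∀ Y ∈ K, ∀ r : ℝ, 0 < r →
      hN K' (A X + r • B X) (A Y + r • B Y) = hN K X Y := by
    intro X hX Y hY r hr
    obtain ⟨s, hs, he⟩ := hfl X hX r hr
    obtain ⟨t, ht, he'⟩ := hfl Y hY r hr
    rw [← h'.hN_smul (mem X hX r hr) (mem Y hY r hr) hs ht, ← he, ← he',
      hT.iso _ (hj.flow X hX r hr) _ (hj.flow Y hY r hr)]
    -- the vertex flow acts by isometries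
    have e : ∀ X Y, Y ∈ K → coneGauge K (fl P r X) (fl P r Y) = coneGauge K X Y := by
      intro X Y hY
      rw [hj.gauge_max h (hj.flow Y hY r hr), hj.gauge_max h hY, hj.Q_fl, hj.Q_fl, hj.P_fl,
        hj.P_fl, h.gauge_smul (hj.right_cl h (subset_closure hY)) (hj.right_ne Y hY)
        (hj.right_ex h hY) hr hr, div_self hr.ne', one_mul]
    rw [hN, hN, e X Y hY, e Y X hX]
  have domA : ∀ X ∈ K, ∀ Y ∈ K, ∃ c : ℝ, 0 ≤ c ∧ c • A Y - A X ∈ closure K' :=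
    fun X hX Y hY => dominated_of_bounded h' (hb Y hY).left_cl (hb Y hY).left_ne
      (hb X hX).right_cl (hb Y hY).right_cl (mem X hX) (mem Y hY) (hdist X hX Y hY)
  have domB : ∀ X ∈ K, ∀ Y ∈ K, ∃ c : ℝ, 0 ≤ c ∧ c • B Y - B X ∈ closure K' := by
    intro X hX Y hY
    refine dominated_of_bounded h' (D := hN K X Y) (hb Y hY).right_cl (hb Y hY).right_ne
      (hb X hX).left_cl (hb Y hY).left_cl (mem' X hX) (mem' Y hY) ?_
    intro ε hε
    have hε' : 0 < ε⁻¹ := by positivity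
    rw [← hdist X hX Y hY ε⁻¹ hε', ← h'.hN_smul (mem X hX _ hε') (mem Y hY _ hε') hε hε]
    simp only [smul_add, smul_smul, mul_inv_cancel₀ hε.ne', one_smul, add_comm]
  obtain ⟨X0, hX0⟩ := h.nonempty
  set V := faceSpan h' (A X0) (hb X0 hX0).left_cl with hV
  set W := faceSpan h' (B X0) (hb X0 hX0).right_cl with hW
  have AV : ∀ X ∈ K, A X ∈ V := by
    intro X hX
    obtain ⟨c, hc0, hc⟩ := domA X hX X0 hX0
    exact mem_faceSpan_of_le h' _ (hb X hX).left_cl hc0 hc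
  have BW : ∀ X ∈ K, B X ∈ W := by
    intro X hX
    obtain ⟨c, hc0, hc⟩ := domB X hX X0 hX0
    exact mem_faceSpan_of_le h' _ (hb X hX).right_cl hc0 hc
  have hdisj : Disjoint V W := by
    rw [Submodule.disjoint_def]
    rintro U0 ⟨c, hc, hc1, hc2⟩ ⟨d, hd, hd1, hd2⟩
    have hb0 := hb X0 hX0
    set a := A X0
    set b := B X0
    -- rescale so that `2U` is dominated by both `a` and `b`
    set t := (2 * (c + d + 1))⁻¹ with ht
    have ht0 : 0 < t := by positivity
    set U := t • U0 with hU
    have htt : 2 * t * (c + d + 1) = 1 := by rw [ht]; field_simp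
    have a1 : a + (2:ℝ) • U ∈ closure K' := by
      have := h'.add_cl (h'.smul_cl hc1 (r := 2 * t) (by positivity))
        (h'.smul_cl hb0.left_cl (r := 2 * t * (d + 1)) (by positivity))
      rwa [show (2 * t) • (c • a + U0) + (2 * t * (d + 1)) • a =
        (2 * t * (c + d + 1)) • a + (2:ℝ) • t • U0 by module, htt, one_smul] at this
    have a2 : a - (2:ℝ) • U ∈ closure K' := by
      have := h'.add_cl (h'.smul_cl hc2 (r := 2 * t) (by positivity))
        (h'.smul_cl hb0.left_cl (r := 2 * t * (d + 1)) (by positivity))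
      rwa [show (2 * t) • (c • a - U0) + (2 * t * (d + 1)) • a =
        (2 * t * (c + d + 1)) • a - (2:ℝ) • t • U0 by module, htt, one_smul] at this
    have b1 : b + (2:ℝ) • U ∈ closure K' := by
      have := h'.add_cl (h'.smul_cl hd1 (r := 2 * t) (by positivity))
        (h'.smul_cl hb0.right_cl (r := 2 * t * (c + 1)) (by positivity))
      rwa [show (2 * t) • (d • b + U0) + (2 * t * (c + 1)) • b =
        (2 * t * (c + d + 1)) • b + (2:ℝ) • t • U0 by module, htt, one_smul] at this
    have b2 : b - (2:ℝ) • U ∈ closure K' := by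
      have := h'.add_cl (h'.smul_cl hd2 (r := 2 * t) (by positivity))
        (h'.smul_cl hb0.right_cl (r := 2 * t * (c + 1)) (by positivity))
      rwa [show (2 * t) • (d • b - U0) + (2 * t * (c + 1)) • b =
        (2 * t * (c + d + 1)) • b - (2:ℝ) • t • U0 by module, htt, one_smul] at this
    have half : ∀ p q : E, p ∈ closure K' → p + (2:ℝ) • q ∈ closure K' → p + q ∈ closure K' := by
      intro p q hp hq
      have := h'.smul_cl (h'.add_cl hp hq) (r := 1/2) (by norm_num)
      rwa [show (1/2:ℝ) • (p + (p + (2:ℝ) • q)) = p + q by module] at this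
    have a2' : a - U ∈ closure K' := by
      have := half a (-U) hb0.left_cl (by rwa [smul_neg, ← sub_eq_add_neg])
      rwa [← sub_eq_add_neg] at this
    have b1' : b + U ∈ closure K' := half b U hb0.right_cl b1
    have b2' : b - U ∈ closure K' := by
      have := half b (-U) hb0.right_cl (by rwa [smul_neg, ← sub_eq_add_neg])
      rwa [← sub_eq_add_neg] at this
    -- `Z` is a point on a geodesic from `a + b` to `a + 4b`
    set Z := a + (2:ℝ) • b + U with hZ
    have kX : a + b ∈ K' := by rw [← eX X0 hX0]; exact hT.maps X0 hX0
    have kY : a + (4:ℝ) • b ∈ K' := mem X0 hX0 4 (by norm_num)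
    have kZ : Z ∈ K' := by
      have := h'.add_mem_cl kX b1'
      rwa [show a + b + (b + U) = Z by rw [hZ]; module] at this
    have g1 : coneGauge K' Z (a + b) ≤ 2 := by
      rw [← h'.gauge_le kX, show (2:ℝ) • (a + b) - Z = a - U by rw [hZ]; module]
      exact a2'
    have g2 : coneGauge K' (a + b) Z ≤ 1 := by
      rw [← h'.gauge_le kZ, show (1:ℝ) • Z - (a + b) = b + U by rw [hZ]; module]
      exact b1'
    have g3 : coneGauge K' (a + (4:ℝ) • b) Z ≤ 2 := by
      rw [← h'.gauge_le kZ, show (2:ℝ) • Z - (a + (4:ℝ) • b) = a + (2:ℝ) • U by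
        rw [hZ]; module]
      exact a1
    have g4 : coneGauge K' Z (a + (4:ℝ) • b) ≤ 1 := by
      rw [← h'.gauge_le kY, show (1:ℝ) • (a + (4:ℝ) • b) - Z = b + (b - U) by
        rw [hZ]; module]
      exact h'.add_cl hb0.right_cl b2'
    obtain ⟨z, hz, hTz⟩ := hT.surj Z kZ
    have n1 : hN K X0 z ≤ 2 := by
      rw [← hT.iso X0 hX0 z hz, hTz, eX X0 hX0, hN]
      have := mul_le_mul g2 g1 (h'.gauge_pos' kZ kX).le zero_le_one
      linarith
    have n2 : hN K z (fl P 4 X0) ≤ 2 := by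
      obtain ⟨s, hs, he⟩ := hfl X0 hX0 4 (by norm_num)
      rw [← hT.iso z hz _ (hj.flow X0 hX0 4 (by norm_num)), hTz, he]
      have e := h'.hN_smul kZ kY one_pos hs
      rw [one_smul] at e
      rw [e, hN]
      have := mul_le_mul g4 g3 (h'.gauge_pos' kY kZ).le zero_le_one
      linarith
    obtain ⟨σ, hσ, s, hs, hze⟩ := hv.rigid h hX0 hz (R := 4) (by norm_num) (by
      have p := h.one_le_hN' hX0 hz
      have q := h.one_le_hN' hz (hj.flow X0 hX0 4 (by norm_num))
      nlinarith)
    obtain ⟨s', hs', he'⟩ := hfl X0 hX0 σ hσ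
    have hZ' : Z = (s * s') • (a + σ • b) := by
      rw [← hTz, hze, hT.hom _ (hj.flow X0 hX0 σ hσ) s hs, he', smul_smul]
    set p := s * s' - 1
    set q := s * s' * σ - 2
    have hUe : U = p • a + q • b := by
      have : U = Z - (a + (2:ℝ) • b) := by rw [hZ]; module
      rw [this, hZ']; module
    have q0 : q = 0 := by
      have i1 := ((hb0 (1 + 2 * p) (2 * q)).1 (by
        rwa [hUe, show a + (2:ℝ) • (p • a + q • b) = (1 + 2 * p) • a + (2 * q) • b by
          module] at a1)).2
      have i2 := ((hb0 (1 - 2 * p) (-2 * q)).1 (by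
        rwa [hUe, show a - (2:ℝ) • (p • a + q • b) = (1 - 2 * p) • a + (-2 * q) • b by
          module] at a2)).2
      linarith
    have p0 : p = 0 := by
      have i1 := ((hb0 (2 * p) (1 + 2 * q)).1 (by
        rwa [hUe, show b + (2:ℝ) • (p • a + q • b) = (2 * p) • a + (1 + 2 * q) • b by
          module] at b1)).1
      have i2 := ((hb0 (-2 * p) (1 - 2 * q)).1 (by
        rwa [hUe, show b - (2:ℝ) • (p • a + q • b) = (-2 * p) • a + (1 - 2 * q) • b by
          module] at b2)).1
      linarith
    have hU0 : t • U0 = 0 := by rw [← hU, hUe, p0, q0]; simp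
    exact (smul_eq_zero.1 hU0).resolve_left ht0.ne'
  have hcod : Codisjoint V W := by
    rw [codisjoint_iff, eq_top_iff]
    intro z _
    refine h'.mem_of_forall (V := V ⊔ W) ?_ z
    intro Y hY
    obtain ⟨X, hX, rfl⟩ := hT.surj Y hY
    rw [eX X hX]
    exact Submodule.add_mem_sup (AV X hX) (BW X hX)
  have hcompl : IsCompl V W := ⟨hdisj, hcod⟩
  set P' : E →ₗ[ℝ] E := V.subtype ∘ₗ Submodule.projectionOnto V W hcompl with hP'
  have PV : ∀ z ∈ V, P' z = z := by
    intro z hz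
    have := Submodule.projectionOnto_apply_left hcompl ⟨z, hz⟩
    simp [hP', this]
  have PW : ∀ z ∈ W, P' z = 0 := by
    intro z hz
    have := (Submodule.projectionOnto_apply_eq_zero_iff hcompl).2 hz
    simp [hP', this]
  have PT : ∀ X ∈ K, P' (T X) = A X := by
    intro X hX
    rw [eX X hX, map_add, PV _ (AV X hX), PW _ (BW X hX), add_zero]
  have QT : ∀ X ∈ K, T X - P' (T X) = B X := by
    intro X hX
    rw [PT X hX, eX X hX, add_sub_cancel_left]
  refine ⟨P', ⟨?_, ?_, ?_, ?_⟩, ?_⟩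
  · intro X
    exact PV _ (Submodule.coe_mem _)
  · intro Y hY r hr
    obtain ⟨X, hX, rfl⟩ := hT.surj Y hY
    rw [fl, QT X hX, PT X hX]
    exact mem X hX r hr
  · intro Y hY
    obtain ⟨X, hX, rfl⟩ := hT.surj Y hY
    rw [PT X hX]
    exact (hb X hX).left_ne
  · intro Y hY
    obtain ⟨X, hX, rfl⟩ := hT.surj Y hY
    rw [QT X hX]
    exact (hb X hX).right_ne
  · intro X hX r hr
    obtain ⟨s, hs, he⟩ := hfl X hX r hr
    refine ⟨s, hs, ?_⟩
    rw [he, fl, QT X hX, PT X hX]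

end ProjIso

/-! ### The image of a vertex is a vertex -/

/-- Numerical core of the rank-one dichotomy. The letters stand for the gauges of the components
of two points: `p, p'` and `q, q'` for a splitting of `K` (with `p p' = 1` since its first summand
is a ray), `a, b` and `c, e` for the splitting of `K'`. Equality of the metrics along the flow forces
one of the two components of the points in `K'` to be proportional. -/
theorem real_rank_one {p p' q q' a b c e : ℝ} (hp : 0 < p) (hq : 0 < q)
    (hq' : 0 < q') (ha : 0 < a) (hb : 0 < b) (hc : 0 < c) (he : 0 < e) (hpp : p * p' = 1)
    (h1 : p * q' = a * e) (h2 : q * p' = c * b)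
    (h3 : ∀ r : ℝ, 0 < r → max p (r⁻¹ * q) * max p' (r * q') = max a (r⁻¹ * c) * max b (r * e)) :
    a * b ≤ 1 ∨ c * e ≤ 1 := by
  have hr : 0 < c / a := by positivity
  have h4 := h3 (c / a) hr
  have e1 : (c / a)⁻¹ * c = a := by field_simp
  rw [e1, max_self] at h4
  have h5 : (c / a)⁻¹ * q * (c / a * q') ≤ a * max b (c / a * e) := by
    rw [← h4]
    exact mul_le_mul (le_max_right _ _) (le_max_right _ _) (by positivity) (by positivity)
  have e2 : (c / a)⁻¹ * q * (c / a * q') = q * q' := by field_simp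
  have e3 : q * q' = (a * b) * (c * e) := by
    calc q * q' = (p * p') * (q * q') := by rw [hpp, one_mul]
      _ = (p * q') * (q * p') := by ring
      _ = _ := by rw [h1, h2]; ring
  rw [e2, e3] at h5
  rcases le_total b (c / a * e) with hbe | hbe
  · left
    rw [max_eq_right hbe, show a * (c / a * e) = c * e by field_simp] at h5
    have : 0 < c * e := by positivity
    by_contra hlt
    push Not at hlt
    nlinarith
  · right
    rw [max_eq_left hbe] at h5
    have : 0 < a * b := by positivity
    by_contra hlt
    push Not at hlt
    nlinarith

/-- A splitting is a vertex as soon as all first components lie on one ray. -/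
theorem IsJoin.isVertex {K : Set E} {P : E →ₗ[ℝ] E} (hj : IsJoin K P) (h : PCone K) {X₀ : E}
    (hX₀ : X₀ ∈ K) (hall : ∀ Y ∈ K, ∃ s : ℝ, 0 < s ∧ P Y = s • P X₀) : IsVertex K P := by
  refine ⟨hj, ?_⟩
  obtain ⟨g, hg⟩ := SeparatingDual.exists_eq_one (R := ℝ) (hj.left_ne X₀ hX₀)
  set l : E →ₗ[ℝ] ℝ := (g : E →ₗ[ℝ] ℝ) ∘ₗ P with hl
  have hlK : ∀ Y ∈ K, 0 < l Y ∧ P Y = l Y • P X₀ := by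
    intro Y hY
    obtain ⟨s, hs, he⟩ := hall Y hY
    have : l Y = s := by
      change g (P Y) = s
      rw [he, map_smul, hg]; simp
    rw [this]
    exact ⟨hs, he⟩
  refine ⟨l, P X₀, ?_, fun X hX => (hlK X hX).1⟩
  intro X
  have := h.mem_of_forall (V := LinearMap.eqLocus P (l.smulRight (P X₀)))
    (fun Y hY => by simpa [LinearMap.mem_eqLocus] using (hlK Y hY).2) X
  simpa [LinearMap.mem_eqLocus] using this

theorem IsVertex.gauge_left {K : Set E} (h : PCone K) {P : E →ₗ[ℝ] E} (hj : IsJoin K P)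
    {l : E →ₗ[ℝ] ℝ} {v : E} (hP : ∀ X, P X = l X • v) (hl : ∀ X ∈ K, 0 < l X) {X Y : E}
    (hY : Y ∈ K) : coneGauge K (P X) (P Y) = l X / l Y := by
  have hlY := hl Y hY
  apply h.gauge_eq (hj.left_cl h (subset_closure hY)) (hj.left_ne Y hY)
  intro c
  have e : c • P Y - P X = (c - l X / l Y) • P Y := by
    rw [hP, hP, smul_smul, smul_smul, ← sub_smul]
    congr 1
    field_simp
  rw [e]
  constructor
  · intro hc
    have := h.nonneg_of_smul_cl (hj.left_cl h (subset_closure hY)) (hj.left_ne Y hY) hc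
    linarith
  · intro hc
    exact h.smul_cl (hj.left_cl h (subset_closure hY)) (by linarith)

/-- The image of a vertex flow is, up to its direction, again a vertex flow: by `real_rank_one`
any two points of `K'` have proportional first or proportional second components, and mixing
components shows that one of the two alternatives holds for all pairs. -/
theorem ProjIso.exists_vertex {K K' : Set E} {T : E → E} (hT : ProjIso K K' T) (h : PCone K)
    (h' : PCone K') {P : E →ₗ[ℝ] E} (hv : IsVertex K P) :
    ∃ P' : E →ₗ[ℝ] E, IsVertex K' P' ∧
      ((∀ X ∈ K, ∀ r : ℝ, 0 < r → ∃ s : ℝ, 0 < s ∧ T (fl P r X) = s • fl P' r (T X)) ∨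
       (∀ X ∈ K, ∀ r : ℝ, 0 < r → ∃ s : ℝ, 0 < s ∧ T (fl P r X) = s • fl P' r⁻¹ (T X))) := by
  obtain ⟨P', hj', hfl⟩ := hT.exists_join h h' hv
  obtain ⟨hj, l, v, hP, hl⟩ := hv
  have hNe : ∀ X ∈ K, ∀ Y ∈ K, ∀ r : ℝ, 0 < r →
      hN K X (fl P r Y) = hN K' (T X) (fl P' r (T Y)) := by
    intro X hX Y hY r hr
    obtain ⟨s, hs, he⟩ := hfl Y hY r hr
    rw [← hT.iso X hX _ (hj.flow Y hY r hr), he]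
    have := h'.hN_smul (hT.maps X hX) (hj'.flow _ (hT.maps Y hY) r hr) one_pos hs
    rwa [one_smul] at this
  have key : ∀ X ∈ K', ∀ Y ∈ K', (∃ s : ℝ, 0 < s ∧ P' X = s • P' Y) ∨
      (∃ s : ℝ, 0 < s ∧ X - P' X = s • (Y - P' Y)) := by
    intro X' hX' Y' hY'
    obtain ⟨X, hX, rfl⟩ := hT.surj X' hX'
    obtain ⟨Y, hY, rfl⟩ := hT.surj Y' hY'
    obtain ⟨r1, hr1, hL1⟩ := hj.hN_large h hX hY
    obtain ⟨r2, hr2, hL2⟩ := hj'.hN_large h' hX' hY'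
    obtain ⟨r3, hr3, hL3⟩ := hj.hN_small h hX hY
    obtain ⟨r4, hr4, hL4⟩ := hj'.hN_small h' hX' hY'
    have e1 := (hL1 (max r1 r2) (le_max_left _ _)).symm.trans
      ((hNe X hX Y hY _ (by positivity)).trans (hL2 (max r1 r2) (le_max_right _ _)))
    have e2 := (hL3 (min r3 r4) (by positivity) (min_le_left _ _)).symm.trans
      ((hNe X hX Y hY _ (by positivity)).trans
        (hL4 (min r3 r4) (by positivity) (min_le_right _ _)))
    have hpos : 0 < max r1 r2 := by positivity
    have hpos' : 0 < (min r3 r4)⁻¹ := by positivity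
    have := real_rank_one (hj.left_pos h hX hY) (hj.right_pos h hX hY)
      (hj.right_pos h hY hX) (hj'.left_pos h' hX' hY') (hj'.left_pos h' hY' hX')
      (hj'.right_pos h' hX' hY') (hj'.right_pos h' hY' hX')
      (by rw [IsVertex.gauge_left h hj hP hl hY, IsVertex.gauge_left h hj hP hl hX]
          have := hl X hX
          have := hl Y hY
          field_simp)
      (mul_left_cancel₀ hpos.ne' e1) (mul_left_cancel₀ hpos'.ne' e2)
      (fun r hr => by
        rw [← hj.hN_fl_right h hX hY hr, ← hj'.hN_fl_right h' hX' hY' hr, hNe X hX Y hY r hr])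
    rcases this with h1 | h1
    · left
      exact h'.eq_of_hN_le (hj'.left_cl h' (subset_closure hY')) (hj'.left_ne _ hY')
        (hj'.left_cl h' (subset_closure hX')) (hj'.left_ne _ hX')
        (hj'.left_ex h' hY') (hj'.left_ex h' hX') h1
    · right
      exact h'.eq_of_hN_le (hj'.right_cl h' (subset_closure hY')) (hj'.right_ne _ hY')
        (hj'.right_cl h' (subset_closure hX')) (hj'.right_ne _ hX')
        (hj'.right_ex h' hY') (hj'.right_ex h' hX') h1
  obtain ⟨X₀, hX₀⟩ := h'.nonempty
  by_cases hall : ∀ Y ∈ K', ∃ s : ℝ, 0 < s ∧ P' Y = s • P' X₀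
  · exact ⟨P', hj'.isVertex h' hX₀ hall, Or.inl hfl⟩
  · push Not at hall
    obtain ⟨Y, hY, hnY⟩ := hall
    refine ⟨LinearMap.id - P', (hj'.swap h').isVertex h' hX₀ ?_, Or.inr ?_⟩
    · intro Z hZ
      have hW := hj'.mix_mem h' hY hZ
      have hPW : P' (P' Y + (Z - P' Z)) = P' Y := by
        simp [hj'.idem]
      rcases key _ hW X₀ hX₀ with ⟨s, hs, he⟩ | ⟨s, hs, he⟩
      · rw [hPW] at he
        exact absurd he (hnY s hs)
      · rw [hPW, add_sub_cancel_left] at he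
        exact ⟨s, hs, by simpa using he⟩
    · intro X hX r hr
      obtain ⟨s, hs, he⟩ := hfl X hX r hr
      refine ⟨s * r, by positivity, ?_⟩
      rw [he, fl_swap P' hr, smul_smul]

/-! ### Gauge isometries are linear -/

/-- A positively homogeneous bijection between cones preserving the one-sided gauges. -/
structure GaugeIso (K K' : Set E) (f : E → E) : Prop where
  maps : ∀ X ∈ K, f X ∈ K'
  surj : ∀ Y ∈ K', ∃ X ∈ K, f X = Y
  hom : ∀ X ∈ K, ∀ r : ℝ, 0 < r → f (r • X) = r • f X
  gauge : ∀ X ∈ K, ∀ Y ∈ K, coneGauge K' (f X) (f Y) = coneGauge K X Y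

/-- `e` spans an extreme ray of the closed cone. -/
def IsExt (K : Set E) (e : E) : Prop :=
  e ∈ closure K ∧ e ≠ 0 ∧ ∀ w ∈ closure K, e - w ∈ closure K → ∃ s : ℝ, w = s • e

theorem PCone.gauge_add_smul {K : Set E} (h : PCone K) {x w : E} (hx : x ∈ K) {c : ℝ}
    (hc : 0 < c) : coneGauge K (x + c • w) x = 1 + c * coneGauge K w x := by
  apply h.gauge_eq (subset_closure hx) (h.ne_zero hx)
  intro k
  have e1 : k • x - (x + c • w) = c • (((k - 1) / c) • x - w) := by
    rw [smul_sub, smul_smul, mul_div_cancel₀ _ hc.ne']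
    module
  have e2 : ((k - 1) / c) • x - w = c⁻¹ • (k • x - (x + c • w)) := by
    rw [e1, smul_smul, inv_mul_cancel₀ hc.ne', one_smul]
  have e3 : k • x - (x + c • w) ∈ closure K ↔ ((k - 1) / c) • x - w ∈ closure K := by
    constructor
    · intro hm
      rw [e2]
      exact h.smul_cl hm (by positivity)
    · intro hm
      rw [e1]
      exact h.smul_cl hm hc.le
  rw [e3, h.gauge_le hx, le_div_iff₀ hc]
  constructor <;> intro hk <;> linarith

namespace GaugeIso

variable {K K' : Set E} {f : E → E}

theorem le_iff (hf : GaugeIso K K' f) (h : PCone K) (h' : PCone K') {x y : E} (hx : x ∈ K)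
    (hy : y ∈ K) : f y - f x ∈ closure K' ↔ y - x ∈ closure K := by
  have h1 := h.gauge_le (x := x) hy (c := 1)
  have h2 := h'.gauge_le (x := f x) (hf.maps y hy) (c := 1)
  rw [one_smul] at h1 h2
  rw [h1, h2, hf.gauge x hx y hy]

theorem inj (hf : GaugeIso K K' f) (h : PCone K) (h' : PCone K') {x y : E} (hx : x ∈ K)
    (hy : y ∈ K) (he : f x = f y) : x = y := by
  apply h.eq_of_cl
  · rw [← hf.le_iff h h' hy hx, he, sub_self]; exact h'.zero_cl
  · rw [← hf.le_iff h h' hx hy, he, sub_self]; exact h'.zero_cl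

/-- Order intervals in an extreme direction are segments, and they are carried to segments at
constant speed. -/
theorem segment_ext (hf : GaugeIso K K' f) (h : PCone K) (h' : PCone K') {e : E} (he : IsExt K e)
    {x : E} (hx : x ∈ K) {t T : ℝ} (ht : 0 < t) (htT : t ≤ T) :
    f (x + t • e) - f x = (t / T) • (f (x + T • e) - f x) := by
  obtain ⟨hec, he0, hext⟩ := he
  have hT : 0 < T := ht.trans_le htT
  have mem : ∀ s : ℝ, 0 ≤ s → x + s • e ∈ K := fun s hs => h.add_mem_cl hx (h.smul_cl hec hs)
  have mono : ∀ s s' : ℝ, 0 ≤ s → s ≤ s' → f (x + s' • e) - f (x + s • e) ∈ closure K' := by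
    intro s s' hs hss
    rw [hf.le_iff h h' (mem s hs) (mem s' (hs.trans hss))]
    rw [show x + s' • e - (x + s • e) = (s' - s) • e by module]
    exact h.smul_cl hec (by linarith)
  have mono0 : ∀ s' : ℝ, 0 ≤ s' → f (x + s' • e) - f x ∈ closure K' := by
    intro s' hs'
    simpa using mono 0 s' le_rfl hs'
  set u := f (x + T • e) - f x with hu
  set u1 := f (x + t • e) - f x with hu1
  have huc : u ∈ closure K' := mono0 T hT.le
  have hu1c : u1 ∈ closure K' := mono0 t ht.le
  have cover : ∀ s ∈ Icc (0:ℝ) 1, s • u - u1 ∈ closure K' ∨ u1 - s • u ∈ closure K' := by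
    rintro s ⟨hs0, hs1⟩
    obtain ⟨y, hy, hye⟩ := hf.surj _ (h'.add_mem_cl (hf.maps x hx) (h'.smul_cl huc hs0))
    have h1 : y - x ∈ closure K := by
      rw [← hf.le_iff h h' hx hy, hye, add_sub_cancel_left]
      exact h'.smul_cl huc hs0
    have h2 : (x + T • e) - y ∈ closure K := by
      rw [← hf.le_iff h h' hy (mem T hT.le), hye]
      rw [show f (x + T • e) - (f x + s • u) = (1 - s) • u by rw [hu]; module]
      exact h'.smul_cl huc (by linarith)
    obtain ⟨σ, hσ⟩ := hext (T⁻¹ • (y - x)) (h.smul_cl h1 (by positivity)) (by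
      have := h.smul_cl h2 (r := T⁻¹) (by positivity)
      rwa [show T⁻¹ • (x + T • e - y) = e - T⁻¹ • (y - x) by
        rw [show x + T • e - y = T • e - (y - x) by abel, smul_sub, smul_smul,
          inv_mul_cancel₀ hT.ne', one_smul]] at this)
    have hyx : y = x + (T * σ) • e := by
      rw [mul_smul, ← hσ, smul_smul, mul_inv_cancel₀ hT.ne', one_smul]
      abel
    have hσ0 : 0 ≤ T * σ := by
      apply h.nonneg_of_smul_cl hec he0
      rwa [hyx, add_sub_cancel_left] at h1
    have e1 : s • u = f (x + (T * σ) • e) - f x := by rw [← hyx, hye, add_sub_cancel_left]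
    rcases le_total t (T * σ) with hle | hle
    · left
      rw [e1, hu1, sub_sub_sub_cancel_right]
      exact mono _ _ ht.le hle
    · right
      rw [e1, hu1, sub_sub_sub_cancel_right]
      exact mono _ _ hσ0 hle
  -- by connectedness of `[0, 1]` some multiple of `u` is both above and below `u1`
  obtain ⟨s, ⟨hs0, -⟩, hsA, hsB⟩ :=
    isPreconnected_closed_iff.1 (isPreconnected_Icc (a := (0:ℝ)) (b := 1))
    {s | s • u - u1 ∈ closure K'} {s | u1 - s • u ∈ closure K'}
    (isClosed_closure.preimage (by fun_prop)) (isClosed_closure.preimage (by fun_prop))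
    cover
    ⟨1, ⟨zero_le_one, le_rfl⟩, by
      change (1:ℝ) • u - u1 ∈ closure K'
      rw [one_smul, hu, hu1, sub_sub_sub_cancel_right]
      exact mono _ _ ht.le htT⟩
    ⟨0, ⟨le_rfl, zero_le_one⟩, by
      change u1 - (0:ℝ) • u ∈ closure K'
      rw [zero_smul, sub_zero]
      exact hu1c⟩
  have hsu : u1 = s • u := h'.eq_of_cl hsB hsA
  have hge : 0 < coneGauge K e x := h.gauge_pos (subset_closure hx) (h.ne_zero hx) hec he0
    (h.exists_le hx e)
  have hs : 0 < s := by
    rcases hs0.eq_or_lt with h0 | h0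
    · exfalso
      rw [← h0, zero_smul, hu1, sub_eq_zero] at hsu
      have := hf.inj h h' (mem t ht.le) hx hsu
      have h3 : t • e = 0 := by simpa using this
      exact (smul_ne_zero ht.ne' he0) h3
    · exact h0
  have g1 : coneGauge K' (f (x + t • e)) (f x) = 1 + s * coneGauge K' u (f x) := by
    rw [← h'.gauge_add_smul (hf.maps x hx) hs, ← hsu, hu1, add_sub_cancel]
  have g2 : coneGauge K' (f (x + T • e)) (f x) = 1 + 1 * coneGauge K' u (f x) := by
    rw [← h'.gauge_add_smul (hf.maps x hx) one_pos, one_smul, hu, add_sub_cancel]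
  rw [hf.gauge _ (mem t ht.le) _ hx, h.gauge_add_smul hx ht] at g1
  rw [hf.gauge _ (mem T hT.le) _ hx, h.gauge_add_smul hx hT] at g2
  have g3 : coneGauge K' u (f x) = T * coneGauge K e x := by linarith
  rw [g3] at g1
  have g4 : t = s * T := by
    have : (t - s * T) * coneGauge K e x = 0 := by linarith
    have := (mul_eq_zero.1 this).resolve_right hge.ne'
    linarith
  rw [hsu, g4, mul_div_cancel_right₀ _ hT.ne']

theorem ray_ext (hf : GaugeIso K K' f) (h : PCone K) (h' : PCone K') {e : E} (he : IsExt K e)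
    {x : E} (hx : x ∈ K) {t : ℝ} (ht : 0 < t) :
    f (x + t • e) = f x + t • (f (x + e) - f x) := by
  rcases le_total t 1 with h1 | h1
  · have := hf.segment_ext h h' he hx ht h1
    rw [one_smul, div_one] at this
    rw [← this, add_sub_cancel]
  · have := hf.segment_ext h h' he hx one_pos h1
    rw [one_smul] at this
    rw [this, smul_smul, mul_one_div_cancel ht.ne', one_smul, add_sub_cancel]

/-- The increment of `f` along an extreme direction does not depend on the base point: compare
`f` at `k x + t e ≥ y + t e`, divide by `t` and let `t → ∞`. -/
theorem translate_le (hf : GaugeIso K K' f) (h : PCone K) (h' : PCone K') {e : E}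
    (he : IsExt K e) {x y : E} (hx : x ∈ K) (hy : y ∈ K) :
    (f (x + e) - f x) - (f (y + e) - f y) ∈ closure K' := by
  obtain ⟨c, hc⟩ := h.exists_le hx y
  obtain ⟨k, hk, hkm⟩ : ∃ k : ℝ, 0 < k ∧ k • x - y ∈ closure K := by
    refine ⟨max c 1, by positivity, ?_⟩
    have := h.add_cl hc (h.smul_cl (subset_closure hx) (sub_nonneg.2 (le_max_left c 1)))
    rwa [show c • x - y + (max c 1 - c) • x = max c 1 • x - y by module] at this
  refine PCone.cl_of_forall (b := k • f x - f y) ?_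
  intro ε hε _
  have hεi : 0 < ε⁻¹ := by positivity
  have hkx := h.smul_mem x hx k hk
  have m1 : k • x + ε⁻¹ • e ∈ K := h.add_mem_cl hkx (h.smul_cl he.1 hεi.le)
  have m2 : y + ε⁻¹ • e ∈ K := h.add_mem_cl hy (h.smul_cl he.1 hεi.le)
  have h1 := (hf.le_iff h h' m2 m1).2 (by
    rwa [add_sub_add_right_eq_sub])
  have e1 : f (k • x + ε⁻¹ • e) = k • f x + ε⁻¹ • (f (x + e) - f x) := by
    have e2 : k • x + ε⁻¹ • e = k • (x + (k⁻¹ * ε⁻¹) • e) := by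
      rw [smul_add, smul_smul, ← mul_assoc, mul_inv_cancel₀ hk.ne', one_mul]
    rw [e2, hf.hom _ (h.add_mem_cl hx (h.smul_cl he.1 (by positivity))) k hk,
      hf.ray_ext h h' he hx (by positivity), smul_add, smul_smul, ← mul_assoc,
      mul_inv_cancel₀ hk.ne', one_mul]
  rw [e1, hf.ray_ext h h' he hy hεi] at h1
  have h2 := h'.smul_cl h1 hε.le
  convert h2 using 1
  match_scalars <;> field_simp <;> ring

/-- The vectors `z` for which `f (x + z) - f x` is independent of `x` form a convex cone, which
contains the extreme directions and hence all of `K`. -/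
theorem additive (hf : GaugeIso K K' f) (h : PCone K) (h' : PCone K')
    (hgen : ∀ x ∈ K, x ∈ convexHull ℝ {e | IsExt K e}) {x y : E} (hx : x ∈ K) (hy : y ∈ K) :
    f (x + y) = f x + f y := by
  set C : Set E := {z | z ∈ closure K ∧ ∃ w : E, ∀ x ∈ K, f (x + z) = f x + w} with hC
  have hsm : ∀ z ∈ C, ∀ r : ℝ, 0 ≤ r → r • z ∈ C := by
    rintro z ⟨hz, w, hw⟩ r hr
    rcases hr.eq_or_lt with rfl | hr
    · exact ⟨by simpa using h.zero_cl, 0, by simp⟩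
    · refine ⟨h.smul_cl hz hr.le, r • w, fun x hx => ?_⟩
      have hx' := h.smul_mem x hx r⁻¹ (by positivity)
      have := hw _ hx'
      have e1 : x + r • z = r • (r⁻¹ • x + z) := by
        rw [smul_add, smul_smul, mul_inv_cancel₀ hr.ne', one_smul]
      rw [e1, hf.hom _ (h.add_mem_cl hx' hz) r hr, this, hf.hom x hx _ (by positivity), smul_add,
        smul_smul, mul_inv_cancel₀ hr.ne', one_smul]
  have hadd : ∀ z ∈ C, ∀ z' ∈ C, z + z' ∈ C := by
    rintro z ⟨hz, w, hw⟩ z' ⟨hz', w', hw'⟩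
    refine ⟨h.add_cl hz hz', w + w', fun x hx => ?_⟩
    rw [← add_assoc, hw' _ (h.add_mem_cl hx hz), hw x hx, add_assoc]
  have hcv : Convex ℝ C := by
    intro z hz z' hz' a b ha hb _
    exact hadd _ (hsm z hz a ha) _ (hsm z' hz' b hb)
  have hsub : convexHull ℝ {e | IsExt K e} ⊆ C := by
    refine convexHull_min ?_ hcv
    intro e he
    obtain ⟨x₀, hx₀⟩ := h.nonempty
    refine ⟨he.1, f (x₀ + e) - f x₀, fun x hx => ?_⟩
    have := h'.eq_of_cl (hf.translate_le h h' he hx₀ hx) (hf.translate_le h h' he hx hx₀)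
    rw [this, add_sub_cancel]
  obtain ⟨-, w, hw⟩ := hsub (hgen y hy)
  have h1 := hw y hy
  rw [← two_smul ℝ y, hf.hom y hy 2 two_pos, two_smul] at h1
  rw [hw x hx, add_left_cancel h1]

end GaugeIso

/-- An additive, positively homogeneous map on `K` extends linearly to the whole space, since
every vector is a difference of points of `K`. -/
theorem PCone.exists_linear {K : Set E} (h : PCone K) {f : E → E}
    (hadd : ∀ x ∈ K, ∀ y ∈ K, f (x + y) = f x + f y)
    (hhom : ∀ x ∈ K, ∀ r : ℝ, 0 < r → f (r • x) = r • f x) :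
    ∃ L : E →ₗ[ℝ] E, ∀ x ∈ K, L x = f x := by
  have hex : ∀ z : E, ∃ a b : E, a ∈ K ∧ b ∈ K ∧ z = a - b := by
    intro z
    obtain ⟨x, hx⟩ := h.nonempty
    obtain ⟨ε, hε, hm⟩ := h.exists_sub_mem hx z
    refine ⟨ε⁻¹ • x, ε⁻¹ • (x - ε • z), h.smul_mem _ hx _ (by positivity),
      h.smul_mem _ hm _ (by positivity), ?_⟩
    rw [← smul_sub, sub_sub_cancel, smul_smul, inv_mul_cancel₀ hε.ne', one_smul]
  choose a b ha hb hab using hex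
  have wd : ∀ z p q, p ∈ K → q ∈ K → z = p - q → f (a z) - f (b z) = f p - f q := by
    intro z p q hp hq hz
    have e : a z + q = p + b z := by
      have := (hab z).symm.trans hz
      rw [sub_eq_sub_iff_add_eq_add] at this
      exact this
    have := congrArg f e
    rw [hadd _ (ha z) _ hq, hadd _ hp _ (hb z)] at this
    rw [sub_eq_sub_iff_add_eq_add]
    exact this
  refine ⟨{ toFun := fun z => f (a z) - f (b z), map_add' := ?_, map_smul' := ?_ }, ?_⟩
  · intro z z'
    rw [wd (z + z') (a z + a z') (b z + b z') (h.add_mem (ha _) (ha _)) (h.add_mem (hb _) (hb _))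
      (by conv_lhs => rw [hab z, hab z']
          abel), hadd _ (ha _) _ (ha _), hadd _ (hb _) _ (hb _)]
    abel
  · intro c z
    simp only [RingHom.id_apply]
    rcases lt_trichotomy c 0 with hc | rfl | hc
    · have hc' : 0 < -c := by linarith
      rw [wd (c • z) ((-c) • b z) ((-c) • a z) (h.smul_mem _ (hb _) _ hc')
        (h.smul_mem _ (ha _) _ hc') (by conv_lhs => rw [hab z]
                                        module), hhom _ (hb _) _ hc', hhom _ (ha _) _ hc']
      module
    · rw [wd ((0:ℝ) • z) (a z) (a z) (ha _) (ha _) (by simp)]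
      simp
    · rw [wd (c • z) (c • a z) (c • b z) (h.smul_mem _ (ha _) _ hc)
        (h.smul_mem _ (hb _) _ hc) (by conv_lhs => rw [hab z]
                                       module), hhom _ (hb _) _ hc, hhom _ (ha _) _ hc]
      module
  · intro x hx
    have := wd x (x + x) x (h.add_mem hx hx) hx (by abel)
    simp only [LinearMap.coe_mk, AddHom.coe_mk]
    rw [this, hadd x hx x hx]
    abel

theorem GaugeIso.exists_equiv {K K' : Set E} {f : E → E} (hf : GaugeIso K K' f) (h : PCone K)
    (h' : PCone K') (hgen : ∀ x ∈ K, x ∈ convexHull ℝ {e | IsExt K e}) :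
    ∃ L : E ≃ₗ[ℝ] E, ∀ x ∈ K, L x = f x := by
  obtain ⟨L, hL⟩ := h.exists_linear (fun x hx y hy => hf.additive h h' hgen hx hy) hf.hom
  have hs : Function.Surjective L := by
    intro z
    refine h'.mem_of_forall (V := LinearMap.range L) ?_ z
    intro Y hY
    obtain ⟨X, hX, rfl⟩ := hf.surj Y hY
    exact ⟨X, hL X hX⟩
  exact ⟨LinearEquiv.ofBijective L ⟨LinearMap.injective_iff_surjective.2 hs, hs⟩, hL⟩

/-- An isometry preserving the flow of a vertex is projective: rescaled so as to preserve the
vertex coordinate, it preserves the one-sided gauges of both components, because the metric far out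
along the flow is a product of these gauges. -/
theorem ProjIso.exists_equiv {K K' : Set E} {T : E → E} (hT : ProjIso K K' T) (h : PCone K)
    (h' : PCone K') (hgen : ∀ x ∈ K, x ∈ convexHull ℝ {e | IsExt K e})
    {P P' : E →ₗ[ℝ] E} (hv : IsVertex K P) (hv' : IsVertex K' P')
    (hfl : ∀ X ∈ K, ∀ r : ℝ, 0 < r → ∃ s : ℝ, 0 < s ∧ T (fl P r X) = s • fl P' r (T X)) :
    ∃ L : E ≃ₗ[ℝ] E, (∀ X, X ∈ K ↔ L X ∈ K') ∧ ∀ X ∈ K, ∃ s : ℝ, 0 < s ∧ L X = s • T X := by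
  obtain ⟨hj, l, v, hP, hl⟩ := hv
  obtain ⟨hj', l', v', hP', hl'⟩ := hv'
  set f : E → E := fun X => (l X / l' (T X)) • T X with hfd
  have hk : ∀ X ∈ K, 0 < l X / l' (T X) := fun X hX =>
    div_pos (hl X hX) (hl' _ (hT.maps X hX))
  have hm : ∀ X ∈ K, f X ∈ K' := fun X hX => h'.smul_mem _ (hT.maps X hX) _ (hk X hX)
  have hlf : ∀ X ∈ K, l' (f X) = l X := by
    intro X hX
    have := hl' _ (hT.maps X hX)
    simp only [hfd, map_smul, smul_eq_mul]
    field_simp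
  have hhom : ∀ X ∈ K, ∀ r : ℝ, 0 < r → f (r • X) = r • f X := by
    intro X hX r hr
    have := hl' _ (hT.maps X hX)
    simp only [hfd, hT.hom X hX r hr, map_smul, smul_eq_mul, smul_smul]
    congr 1
    field_simp
  have hiso : ∀ X ∈ K, ∀ Y ∈ K, hN K' (f X) (f Y) = hN K X Y := by
    intro X hX Y hY
    rw [← hT.iso X hX Y hY]
    exact h'.hN_smul (hT.maps X hX) (hT.maps Y hY) (hk X hX) (hk Y hY)
  have hflow : ∀ X ∈ K, ∀ r : ℝ, 0 < r → ∃ s : ℝ, 0 < s ∧ f (fl P r X) = s • fl P' r (f X) := by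
    intro X hX r hr
    obtain ⟨s, hs, he⟩ := hfl X hX r hr
    have hk1 := hk X hX
    have hk2 := hk _ (hj.flow X hX r hr)
    refine ⟨l (fl P r X) / l' (T (fl P r X)) * s * (l X / l' (T X))⁻¹, by positivity, ?_⟩
    change (l (fl P r X) / l' (T (fl P r X))) • T (fl P r X) = _
    have e1 : fl P' r (f X) = (l X / l' (T X)) • fl P' r (T X) := IsJoin.fl_smul _ _ _
    rw [e1, smul_smul, inv_mul_cancel_right₀ hk1.ne', ← smul_smul]
    congr 1
  have hleft : ∀ X ∈ K, ∀ Y ∈ K,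
      coneGauge K' (P' (f X)) (P' (f Y)) = coneGauge K (P X) (P Y) := by
    intro X hX Y hY
    rw [IsVertex.gauge_left h hj hP hl hY, IsVertex.gauge_left h' hj' hP' hl' (hm Y hY),
      hlf X hX, hlf Y hY]
  have hright : ∀ X ∈ K, ∀ Y ∈ K,
      coneGauge K' (f Y - P' (f Y)) (f X - P' (f X)) = coneGauge K (Y - P Y) (X - P X) := by
    intro X hX Y hY
    obtain ⟨r1, hr1, hL1⟩ := hj.hN_large h hX hY
    obtain ⟨r2, hr2, hL2⟩ := hj'.hN_large h' (hm X hX) (hm Y hY)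
    have hpos : 0 < max r1 r2 := by positivity
    have e0 : hN K X (fl P (max r1 r2) Y) = hN K' (f X) (fl P' (max r1 r2) (f Y)) := by
      obtain ⟨s, hs, he⟩ := hflow Y hY _ hpos
      rw [← hiso X hX _ (hj.flow Y hY _ hpos), he]
      have := h'.hN_smul (hm X hX) (hj'.flow _ (hm Y hY) _ hpos) one_pos hs
      rwa [one_smul] at this
    rw [hL1 _ (le_max_left _ _), hL2 _ (le_max_right _ _), hleft X hX Y hY] at e0
    exact (mul_left_cancel₀ (hj.left_pos h hX hY).ne' (mul_left_cancel₀ hpos.ne' e0)).symm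
  have hG : GaugeIso K K' f := by
    refine ⟨hm, ?_, hhom, ?_⟩
    · intro Y hY
      obtain ⟨X, hX, rfl⟩ := hT.surj Y hY
      have hk1 := hk X hX
      refine ⟨(l X / l' (T X))⁻¹ • X, h.smul_mem _ hX _ (by positivity), ?_⟩
      rw [hhom X hX _ (by positivity)]
      change _ • _ • T X = _
      rw [smul_smul, inv_mul_cancel₀ hk1.ne', one_smul]
    · intro X hX Y hY
      rw [hj.gauge_max h hY, hj'.gauge_max h' (hm Y hY), hleft X hX Y hY, hright Y hY X hX]
  obtain ⟨L, hL⟩ := hG.exists_equiv h h' hgen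
  refine ⟨L, fun X => ⟨fun hX => ?_, fun hX => ?_⟩, fun X hX => ⟨_, hk X hX, hL X hX⟩⟩
  · rw [hL X hX]; exact hm X hX
  · obtain ⟨Z, hZ, he⟩ := hG.surj _ hX
    rw [← hL Z hZ] at he
    rwa [← L.injective he]

/-! ### Homogeneity of the image cone -/

/-- Transitivity, up to scaling, of the linear automorphism group of the cone. -/
def ConeHomogeneous (K : Set E) : Prop :=
  ∀ X ∈ K, ∀ Y ∈ K, ∃ g : E ≃ₗ[ℝ] E, (∀ Z, Z ∈ K ↔ g Z ∈ K) ∧ ∃ s : ℝ, 0 < s ∧ g X = s • Y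

theorem cl_equiv {K : Set E} (g : E ≃ₗ[ℝ] E) (hg : ∀ Z, Z ∈ K ↔ g Z ∈ K) (Z : E) :
    Z ∈ closure K ↔ g Z ∈ closure K := by
  have e : K = g.toContinuousLinearEquiv.toHomeomorph ⁻¹' K := by
    ext W
    exact hg W
  conv_lhs => rw [e, ← Homeomorph.preimage_closure]
  rfl

theorem gauge_equiv {K : Set E} (g : E ≃ₗ[ℝ] E) (hg : ∀ Z, Z ∈ K ↔ g Z ∈ K) (X Y : E) :
    coneGauge K (g X) (g Y) = coneGauge K X Y := by
  unfold coneGauge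
  congr 1
  ext c
  simp only [mem_ofPred_eq]
  rw [cl_equiv g hg (c • Y - X), map_sub, map_smul]

theorem projIso_equiv {K : Set E} (g : E ≃ₗ[ℝ] E) (hg : ∀ Z, Z ∈ K ↔ g Z ∈ K) :
    ProjIso K K g where
  maps X hX := (hg X).1 hX
  surj Y hY := ⟨g.symm Y, (hg _).2 (by simpa using hY), by simp⟩
  hom X _ r _ := by simp
  iso X _ Y _ := by
    unfold hN
    rw [gauge_equiv g hg, gauge_equiv g hg]

/-- The conjugate of the projection `P` by `g`. -/
def conjProj (g : E ≃ₗ[ℝ] E) (P : E →ₗ[ℝ] E) : E →ₗ[ℝ] E :=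
  (g : E →ₗ[ℝ] E) ∘ₗ P ∘ₗ (g.symm : E →ₗ[ℝ] E)

theorem fl_conj (g : E ≃ₗ[ℝ] E) (P : E →ₗ[ℝ] E) (r : ℝ) (X : E) :
    fl (conjProj g P) r (g X) = g (fl P r X) := by
  simp [fl, conjProj]

theorem IsVertex.conj {K : Set E} {P : E →ₗ[ℝ] E} (hv : IsVertex K P) (g : E ≃ₗ[ℝ] E)
    (hg : ∀ Z, Z ∈ K ↔ g Z ∈ K) : IsVertex K (conjProj g P) := by
  obtain ⟨hj, l, v, hP, hl⟩ := hv
  have hs : ∀ X ∈ K, g.symm X ∈ K := fun X hX => (hg _).2 (by simpa using hX)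
  refine ⟨⟨?_, ?_, ?_, ?_⟩, l ∘ₗ (g.symm : E →ₗ[ℝ] E), g v, ?_, ?_⟩
  · intro X
    simp [conjProj, hj.idem]
  · intro X hX r hr
    have := fl_conj g P r (g.symm X)
    rw [g.apply_symm_apply] at this
    rw [this]
    exact (hg _).1 (hj.flow _ (hs X hX) r hr)
  · intro X hX h0
    apply hj.left_ne _ (hs X hX)
    simpa [conjProj] using h0
  · intro X hX h0
    apply hj.right_ne _ (hs X hX)
    apply g.injective
    simpa [conjProj] using h0
  · intro X
    simp [conjProj, hP]
  · intro X hX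
    exact hl _ (hs X hX)

/-- Homogeneity and the presence of a vertex pass along isometries. If `T` preserves the flow of
some vertex it is linear up to scaling and conjugates automorphisms; if it reverses the flows of
both a vertex and its image under `g`, then it is the conjugate of `g` by `T` that preserves the
flow of a vertex. -/
theorem ProjIso.homogeneous {K K' : Set E} {T : E → E} (hT : ProjIso K K' T) (h : PCone K)
    (h' : PCone K') (hgen : ∀ x ∈ K, x ∈ convexHull ℝ {e | IsExt K e})
    (hgen' : ∀ x ∈ K', x ∈ convexHull ℝ {e | IsExt K' e})
    {P : E →ₗ[ℝ] E} (hv : IsVertex K P) (hhom : ConeHomogeneous K) :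
    (∃ P', IsVertex K' P') ∧ ConeHomogeneous K' := by
  obtain ⟨P1', hv1', hs1⟩ := hT.exists_vertex h h' hv
  refine ⟨⟨P1', hv1'⟩, ?_⟩
  intro X' hX' Y' hY'
  obtain ⟨X, hX, rfl⟩ := hT.surj X' hX'
  obtain ⟨Y, hY, rfl⟩ := hT.surj Y' hY'
  obtain ⟨g, hg, s, hs, hgX⟩ := hhom X hX Y hY
  have hlin : (∃ L : E ≃ₗ[ℝ] E, (∀ X, X ∈ K ↔ L X ∈ K') ∧
      ∀ X ∈ K, ∃ s : ℝ, 0 < s ∧ L X = s • T X) →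
      ∃ g : E ≃ₗ[ℝ] E, (∀ Z, Z ∈ K' ↔ g Z ∈ K') ∧ ∃ s : ℝ, 0 < s ∧ g (T X) = s • T Y := by
    rintro ⟨L, hL, hLT⟩
    refine ⟨L.symm.trans (g.trans L), ?_, ?_⟩
    · intro Z
      simp only [LinearEquiv.trans_apply]
      rw [← hL, ← hg, hL, L.apply_symm_apply]
    · obtain ⟨a, ha, hae⟩ := hLT X hX
      obtain ⟨b, hb, hbe⟩ := hLT Y hY
      refine ⟨a⁻¹ * s * b, by positivity, ?_⟩
      have e1 : T X = L (a⁻¹ • X) := by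
        rw [map_smul, hae, smul_smul, inv_mul_cancel₀ ha.ne', one_smul]
      simp only [LinearEquiv.trans_apply]
      rw [e1, L.symm_apply_apply, map_smul, hgX, map_smul, map_smul, hbe, smul_smul, smul_smul,
        mul_assoc]
  have hv2 := hv.conj g hg
  obtain ⟨P2', hv2', hs2⟩ := hT.exists_vertex h h' hv2
  rcases hs1 with hs1 | hs1
  · exact hlin (hT.exists_equiv h h' hgen hv hv1' hs1)
  rcases hs2 with hs2 | hs2
  · exact hlin (hT.exists_equiv h h' hgen hv2 hv2' hs2)
  obtain ⟨S, hS, hST, -⟩ := hT.exists_symm h h'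
  have hgI := projIso_equiv g hg
  have hR : ProjIso K' K' (fun Z => T (g (S Z))) := hS.comp (hgI.comp hT)
  have hflow : ∀ Z ∈ K', ∀ r : ℝ, 0 < r → ∃ s : ℝ, 0 < s ∧
      T (g (S (fl P1' r Z))) = s • fl P2' r (T (g (S Z))) := by
    intro Z' hZ' r hr
    obtain ⟨Z, hZ, rfl⟩ := hT.surj Z' hZ'
    have hri : 0 < r⁻¹ := by positivity
    obtain ⟨a, ha, hae⟩ := hs1 Z hZ r⁻¹ hri
    obtain ⟨b, hb, hbe⟩ := hs2 (g Z) ((hg Z).1 hZ) r⁻¹ hri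
    rw [inv_inv] at hae hbe
    rw [fl_conj] at hbe
    have hm := hv.1.flow Z hZ r⁻¹ hri
    have e1 : fl P1' r (T Z) = a⁻¹ • T (fl P r⁻¹ Z) := by
      rw [hae, smul_smul, inv_mul_cancel₀ ha.ne', one_smul]
    refine ⟨a⁻¹ * b, by positivity, ?_⟩
    rw [e1, hS.hom _ (hT.maps _ hm) _ (by positivity), hST _ hm, hST _ hZ, map_smul,
      hT.hom _ ((hg _).1 hm) _ (by positivity), hbe, smul_smul]
  obtain ⟨M, hM, hMS⟩ := hR.exists_equiv h' h' hgen' hv1' hv2' hflow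
  refine ⟨M, hM, ?_⟩
  obtain ⟨a, ha, hae⟩ := hMS _ hX'
  refine ⟨a * s, by positivity, ?_⟩
  rw [hae, hST X hX, hgX, hT.hom Y hY s hs, smul_smul]

end Cones

/-! ### The cone over a convex domain -/

/-- The ambient space of the cone over a domain in `ℝⁿ`. -/
abbrev Amb (n : ℕ) := Fin (n + 1) → ℝ

/-- A nonempty convex domain. -/
structure CDom {n : ℕ} (Ω : Set (Euc n)) : Prop where
  ne : Ω.Nonempty
  op : IsOpen Ω
  bd : Bornology.IsBounded Ω
  cv : Convex ℝ Ω

/-- The first `n` homogeneous coordinates. -/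
def pr {n : ℕ} : Amb n →ₗ[ℝ] Euc n where
  toFun w := WithLp.toLp 2 (fun i => w (Fin.castSucc i))
  map_add' _ _ := by ext i; simp
  map_smul' _ _ := by ext i; simp

/-- The last homogeneous coordinate. -/
def ht {n : ℕ} : Amb n →ₗ[ℝ] ℝ := LinearMap.proj (Fin.last n)

/-- The inclusion of `ℝⁿ` as the hyperplane at infinity. -/
def emb {n : ℕ} : Euc n →ₗ[ℝ] Amb n where
  toFun x := Fin.snoc (fun i => x i) 0
  map_add' x y := by
    ext i
    refine Fin.lastCases ?_ (fun j => ?_) i <;> simp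
  map_smul' r x := by
    ext i
    refine Fin.lastCases ?_ (fun j => ?_) i <;> simp

/-- The homogeneous coordinates `(x, 1)` of a point of the affine chart. -/
def hat {n : ℕ} (x : Euc n) : Amb n := Fin.snoc (fun i => x i) 1

section Coordinates

variable {n : ℕ}

@[simp] theorem pr_emb (x : Euc n) : pr (emb x) = x := by
  ext i
  simp [pr, emb]

@[simp] theorem ht_emb (x : Euc n) : ht (emb x) = 0 := by
  simp [ht, emb]

@[simp] theorem pr_hat (x : Euc n) : pr (hat x) = x := by
  ext i
  simp [pr, hat]

@[simp] theorem ht_hat (x : Euc n) : ht (hat x) = 1 := by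
  simp [ht, hat]

theorem amb_ext {w z : Amb n} (h1 : pr w = pr z) (h2 : ht w = ht z) : w = z := by
  ext i
  refine Fin.lastCases ?_ (fun j => ?_) i
  · exact h2
  · have := congrArg (fun x : Euc n => x j) h1
    simpa [pr] using this

theorem hat_eq (x : Euc n) : hat x = emb x + hat 0 :=
  amb_ext (by simp) (by simp)

theorem hat_ne_zero (x : Euc n) : hat x ≠ 0 := by
  intro h0
  have := congrArg ht h0
  simp at this

theorem hat_inj {x y : Euc n} (he : hat x = hat y) : x = y := by
  simpa using congrArg pr he

theorem continuous_pr : Continuous (pr (n := n)) := LinearMap.continuous_of_finiteDimensional _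

theorem continuous_ht : Continuous (ht (n := n)) := LinearMap.continuous_of_finiteDimensional _

theorem continuous_hat : Continuous (hat (n := n)) := by
  have : Continuous (fun x : Euc n => emb x + hat 0) :=
    (LinearMap.continuous_of_finiteDimensional emb).add continuous_const
  exact this.congr fun x => (hat_eq x).symm

/-- The point of the affine chart with homogeneous coordinates `w`. -/
def pt (w : Amb n) : Euc n := (ht w)⁻¹ • pr w

theorem smul_hat_pt {w : Amb n} (hw : ht w ≠ 0) : ht w • hat (pt w) = w := by
  apply amb_ext
  · simp [pt, smul_smul, mul_inv_cancel₀ hw]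
  · simp

@[simp] theorem pt_smul_hat {r : ℝ} (hr : r ≠ 0) (x : Euc n) : pt (r • hat x) = x := by
  simp [pt, smul_smul, inv_mul_cancel₀ hr]

theorem comb_hat {a b : ℝ} (hab : a + b = 1) (x y : Euc n) :
    a • hat x + b • hat y = hat (a • x + b • y) :=
  amb_ext (by simp) (by simp [hab])

/-- The open cone over `Ω`. -/
def coneOf (Ω : Set (Euc n)) : Set (Amb n) := {w | 0 < ht w ∧ pt w ∈ Ω}

theorem smul_hat_mem {Ω : Set (Euc n)} {x : Euc n} {r : ℝ} (hr : 0 < r) :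
    r • hat x ∈ coneOf Ω ↔ x ∈ Ω := by
  change (0 < ht (r • hat x) ∧ pt (r • hat x) ∈ Ω) ↔ _
  rw [pt_smul_hat hr.ne']
  simp [hr]

theorem hat_mem {Ω : Set (Euc n)} {x : Euc n} : hat x ∈ coneOf Ω ↔ x ∈ Ω := by
  have := smul_hat_mem (Ω := Ω) (x := x) one_pos
  rwa [one_smul] at this

theorem exists_of_mem {Ω : Set (Euc n)} {w : Amb n} (hw : w ∈ coneOf Ω) :
    ∃ r : ℝ, 0 < r ∧ ∃ x ∈ Ω, w = r • hat x :=
  ⟨ht w, hw.1, pt w, hw.2, (smul_hat_pt hw.1.ne').symm⟩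

theorem continuousAt_pt {w : Amb n} (hw : ht w ≠ 0) : ContinuousAt pt w :=
  (continuous_ht.continuousAt.inv₀ hw).smul continuous_pr.continuousAt

theorem CDom.bound {Ω : Set (Euc n)} (hΩ : CDom Ω) :
    ∃ R : ℝ, 0 < R ∧ ∀ w ∈ closure (coneOf Ω), ‖pr w‖ ≤ R * ht w := by
  obtain ⟨R, hR, hb⟩ := hΩ.bd.exists_pos_norm_le
  refine ⟨R, hR, ?_⟩
  have hc : IsClosed {w : Amb n | ‖pr w‖ ≤ R * ht w} :=
    isClosed_le continuous_pr.norm (continuous_const.mul continuous_ht)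
  refine fun w hw => (closure_minimal ?_ hc) hw
  intro w hw
  obtain ⟨r, hr, x, hx, rfl⟩ := exists_of_mem hw
  have := hb x hx
  change ‖pr (r • hat x)‖ ≤ R * ht (r • hat x)
  rw [map_smul, map_smul, pr_hat, ht_hat, norm_smul, Real.norm_eq_abs, abs_of_pos hr, smul_eq_mul,
    mul_one]
  nlinarith

theorem CDom.ht_nonneg {Ω : Set (Euc n)} (hΩ : CDom Ω) {w : Amb n}
    (hw : w ∈ closure (coneOf Ω)) : 0 ≤ ht w := by
  obtain ⟨R, hR, hb⟩ := hΩ.bound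
  have := (norm_nonneg _).trans (hb w hw)
  exact nonneg_of_mul_nonneg_right this hR

theorem CDom.ht_pos {Ω : Set (Euc n)} (hΩ : CDom Ω) {w : Amb n}
    (hw : w ∈ closure (coneOf Ω)) (h0 : w ≠ 0) : 0 < ht w := by
  rcases (hΩ.ht_nonneg hw).eq_or_lt with h1 | h1
  · exfalso
    obtain ⟨R, hR, hb⟩ := hΩ.bound
    have := hb w hw
    rw [← h1, mul_zero] at this
    exact h0 (amb_ext (by simpa using this) (by simpa using h1.symm))
  · exact h1

theorem CDom.pcone {Ω : Set (Euc n)} (hΩ : CDom Ω) : PCone (coneOf Ω) where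
  isOpen := by
    rw [isOpen_iff_mem_nhds]
    rintro w ⟨hw, hx⟩
    have h1 : {w : Amb n | 0 < ht w} ∈ nhds w :=
      (isOpen_lt continuous_const continuous_ht).mem_nhds hw
    have h2 := (continuousAt_pt hw.ne').preimage_mem_nhds (hΩ.op.mem_nhds hx)
    exact Filter.inter_mem h1 h2
  convex := by
    rw [convex_iff_forall_pos]
    rintro w hw z hz a b ha hb -
    obtain ⟨r, hr, x, hx, rfl⟩ := exists_of_mem hw
    obtain ⟨s, hs, y, hy, rfl⟩ := exists_of_mem hz
    have hpos : 0 < a * r + b * s := by positivity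
    have e : a • r • hat x + b • s • hat y =
        (a * r + b * s) • hat ((a * r / (a * r + b * s)) • x + (b * s / (a * r + b * s)) • y) := by
      rw [← comb_hat (by field_simp), smul_add, smul_smul, smul_smul, smul_smul, smul_smul,
        mul_div_cancel₀ _ hpos.ne', mul_div_cancel₀ _ hpos.ne']
    rw [e, smul_hat_mem hpos]
    exact hΩ.cv hx hy (by positivity) (by positivity) (by field_simp)
  smul_mem := by
    intro w hw t ht
    obtain ⟨r, hr, x, hx, rfl⟩ := exists_of_mem hw
    rw [smul_smul, smul_hat_mem (by positivity)]
    exact hx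
  nonempty := hΩ.ne.imp' hat fun x hx => hat_mem.2 hx
  zero_notMem := by
    rintro ⟨h0, -⟩
    simp at h0
  salient := by
    intro w hw hw'
    by_contra h0
    have h1 := hΩ.ht_pos hw h0
    have h2 := hΩ.ht_nonneg hw'
    rw [map_neg] at h2
    linarith

theorem CDom.hat_cl {Ω : Set (Euc n)} {x : Euc n} (hx : x ∈ closure Ω) :
    hat x ∈ closure (coneOf Ω) :=
  map_mem_closure continuous_hat hx fun _ hy => hat_mem.2 hy

theorem CDom.pt_cl {Ω : Set (Euc n)} {w : Amb n} (hw : w ∈ closure (coneOf Ω))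
    (hpos : 0 < ht w) : pt w ∈ closure Ω :=
  (continuousAt_pt hpos.ne').continuousWithinAt.mem_closure hw fun _ hz => hz.2

theorem CDom.isExt {Ω : Set (Euc n)} (hΩ : CDom Ω) {e : Euc n}
    (he : e ∈ extremePoints ℝ (closure Ω)) : IsExt (coneOf Ω) (hat e) := by
  rw [mem_extremePoints_iff_left] at he
  refine ⟨CDom.hat_cl he.1, hat_ne_zero e, ?_⟩
  intro w hw hw'
  by_cases h0 : w = 0
  · exact ⟨0, by simp [h0]⟩
  by_cases h1 : hat e - w = 0
  · exact ⟨1, by rw [one_smul, sub_eq_zero.1 h1]⟩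
  have p0 := hΩ.ht_pos hw h0
  have p1 := hΩ.ht_pos hw' h1
  have e1 : ht (hat e - w) = 1 - ht w := by simp
  have e2 : hat e = ht w • hat (pt w) + ht (hat e - w) • hat (pt (hat e - w)) := by
    rw [smul_hat_pt p0.ne', smul_hat_pt p1.ne', add_sub_cancel]
  have e3 : ht w + ht (hat e - w) = 1 := by rw [e1]; ring
  rw [comb_hat e3] at e2
  have := he.2 (pt w) (CDom.pt_cl hw p0) _ (CDom.pt_cl hw' p1)
    ⟨_, _, p0, p1, e3, (hat_inj e2).symm⟩
  refine ⟨ht w, ?_⟩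
  conv_rhs => rw [← this]
  rw [smul_hat_pt p0.ne']

theorem IsExt.smul_pos {K : Set (Amb n)} (hK : PCone K) {e : Amb n} (he : IsExt K e) {r : ℝ}
    (hr : 0 < r) : IsExt K (r • e) := by
  refine ⟨hK.smul_cl he.1 hr.le, smul_ne_zero hr.ne' he.2.1, ?_⟩
  intro w hw hw'
  obtain ⟨s, hs⟩ := he.2.2 (r⁻¹ • w) (hK.smul_cl hw (by positivity)) (by
    have := hK.smul_cl hw' (r := r⁻¹) (by positivity)
    rwa [smul_sub, smul_smul, inv_mul_cancel₀ hr.ne', one_smul] at this)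
  refine ⟨s, ?_⟩
  rw [smul_comm, ← hs, smul_smul, mul_inv_cancel₀ hr.ne', one_smul]

theorem CDom.subset_convexHull {Ω : Set (Euc n)} (hΩ : CDom Ω) :
    Ω ⊆ convexHull ℝ (extremePoints ℝ (closure Ω)) := by
  set C := convexHull ℝ (extremePoints ℝ (closure Ω)) with hC
  have hcomp : IsCompact (closure Ω) := hΩ.bd.isCompact_closure
  have hcl : closure C = closure Ω := closure_convexHull_extremePoints hcomp hΩ.cv.closure
  have hcv : Convex ℝ C := convex_convexHull ℝ _
  have hspan : affineSpan ℝ C = ⊤ := by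
    rw [eq_top_iff, ← hΩ.op.affineSpan_eq_top hΩ.ne]
    rw [affineSpan_le]
    have hcs : IsClosed (affineSpan ℝ C : Set (Euc n)) :=
      AffineSubspace.closed_of_finiteDimensional _
    exact subset_closure.trans (hcl ▸ closure_minimal (subset_affineSpan ℝ C) hcs)
  have hintr := hcv.interior_nonempty_iff_affineSpan_eq_top.2 hspan
  have h1 : Ω ⊆ interior (closure C) := by
    rw [hcl]
    exact interior_maximal subset_closure hΩ.op
  rw [hcv.interior_closure_eq_interior_of_nonempty_interior hintr] at h1
  exact h1.trans interior_subset

theorem CDom.gen {Ω : Set (Euc n)} (hΩ : CDom Ω) :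
    ∀ w ∈ coneOf Ω, w ∈ convexHull ℝ {e | IsExt (coneOf Ω) e} := by
  intro w hw
  obtain ⟨r, hr, x, hx, rfl⟩ := exists_of_mem hw
  have hsub : convexHull ℝ (extremePoints ℝ (closure Ω)) ⊆
      {x | r • hat x ∈ convexHull ℝ {e | IsExt (coneOf Ω) e}} := by
    refine convexHull_min ?_ ?_
    · intro e he
      exact _root_.subset_convexHull ℝ _ ((hΩ.isExt he).smul_pos hΩ.pcone hr)
    · intro y hy z hz a b ha hb hab
      rw [mem_ofPred_eq] at hy hz ⊢
      rw [← comb_hat hab, smul_add, smul_comm r a, smul_comm r b]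
      exact convex_convexHull ℝ _ hy hz ha hb hab
  exact hsub (hΩ.subset_convexHull hx)

end Coordinates

/-! ### The Hilbert metric in terms of the cone -/

section Hilbert

variable {n : ℕ}

/-- On the line through `x` and `y`, the boundary point on the side of `x` computes the gauge. -/
theorem CDom.ratio {Ω : Set (Euc n)} (hΩ : CDom Ω) {x y α : Euc n} (hx : x ∈ Ω) (hy : y ∈ Ω)
    (hxy : x ≠ y) (hα : α ∈ frontier Ω) (hcol : Collinear ℝ ({α, x, y} : Set (Euc n)))
    (hd : dist α x < dist α y) :
    dist α y / dist α x = coneGauge (coneOf Ω) (hat y) (hat x) := by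
  obtain ⟨t, hte⟩ : ∃ t : ℝ, α = x + t • (y - x) := by
    obtain ⟨v, hv⟩ := (collinear_iff_of_mem (p₀ := x) (by simp)).1 hcol
    obtain ⟨a, ha⟩ := hv α (by simp)
    obtain ⟨b, hb⟩ := hv y (by simp)
    have hb0 : b ≠ 0 := by
      rintro rfl
      apply hxy
      rw [hb]; simp
    refine ⟨a / b, ?_⟩
    rw [ha, hb]
    simp only [vadd_eq_add, add_sub_cancel_right, smul_smul, div_mul_cancel₀ _ hb0]
    abel
  have hαΩ : α ∉ Ω := fun hm => by
    rw [hΩ.op.frontier_eq] at hα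
    exact hα.2 hm
  have hn : 0 < ‖y - x‖ := norm_pos_iff.2 (sub_ne_zero.2 hxy.symm)
  have d1 : dist α x = |t| * ‖y - x‖ := by
    rw [dist_eq_norm, hte, add_sub_cancel_left, norm_smul, Real.norm_eq_abs]
  have d2 : dist α y = |1 - t| * ‖y - x‖ := by
    rw [dist_eq_norm, hte, show x + t • (y - x) - y = (-(1 - t)) • (y - x) by module, norm_smul,
      Real.norm_eq_abs, abs_neg]
  have ht1 : |t| < |1 - t| := by
    rw [d1, d2] at hd
    exact lt_of_mul_lt_mul_right hd hn.le
  have ht0 : t < 0 := by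
    by_contra hge
    push Not at hge
    have hlt : t < 1 := by
      by_contra h1
      push Not at h1
      rw [abs_of_nonneg hge, abs_of_nonpos (by linarith)] at ht1
      linarith
    apply hαΩ
    have := hΩ.cv hx hy (a := 1 - t) (b := t) (by linarith) hge (by ring)
    rwa [hte, show x + t • (y - x) = (1 - t) • x + t • y by module]
  have hK := hΩ.pcone
  have hm : 0 < -t := by linarith
  have htn : t ≠ 0 := ht0.ne
  rw [d1, d2, mul_div_mul_right _ _ hn.ne', abs_of_neg ht0, abs_of_pos (by linarith)]
  symm
  -- the extremal combination `c • x̂ - ŷ` is the positive multiple `(-t)⁻¹ • α̂`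
  have e : ((1 - t) / -t) • hat x - hat y = (-t)⁻¹ • hat α := by
    apply amb_ext
    · simp only [map_sub, map_smul, pr_hat, hte]
      match_scalars <;> field_simp
      ring
    · simp only [map_sub, map_smul, ht_hat, smul_eq_mul]
      field_simp
      ring
  apply hK.gauge_eq (subset_closure (hat_mem.2 hx)) (hat_ne_zero x)
  intro c
  constructor
  · intro hc
    by_contra hlt
    push Not at hlt
    apply hαΩ
    have h1 := hK.smul_mem _ (hat_mem.2 hx) ((1 - t) / -t - c) (by linarith)
    have h2 := hK.add_mem_cl h1 hc
    rw [show ((1 - t) / -t - c) • hat x + (c • hat x - hat y)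
      = ((1 - t) / -t) • hat x - hat y by module, e, smul_hat_mem (by positivity)] at h2
    exact h2
  · intro hc
    have h1 := hK.smul_cl (CDom.hat_cl (frontier_subset_closure hα)) (r := (-t)⁻¹) (by positivity)
    rw [← e] at h1
    have h2 := hK.add_cl h1 (hK.smul_cl (subset_closure (hat_mem.2 hx)) (sub_nonneg.2 hc))
    rwa [show ((1 - t) / -t) • hat x - hat y + (c - (1 - t) / -t) • hat x
      = c • hat x - hat y by module] at h2

/-- The boundary point is the chart image of `M(ŷ/x̂) x̂ - ŷ`. -/
theorem CDom.exists_end {Ω : Set (Euc n)} (hΩ : CDom Ω) {x y : Euc n} (hx : x ∈ Ω)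
    (hxy : x ≠ y) :
    ∃ α ∈ frontier Ω, Collinear ℝ ({α, x, y} : Set (Euc n)) ∧ dist α x < dist α y := by
  have hK := hΩ.pcone
  set c := coneGauge (coneOf Ω) (hat y) (hat x) with hc
  have hcm : c • hat x - hat y ∈ closure (coneOf Ω) := (hK.gauge_le (hat_mem.2 hx)).2 le_rfl
  have hw0 : c • hat x - hat y ≠ 0 := by
    intro h0
    have h1 : c - 1 = 0 := by simpa using congrArg ht h0
    have h2 : c = 1 := by linarith
    rw [h2, one_smul, sub_eq_zero] at h0
    exact hxy (hat_inj h0)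
  have hpos := hΩ.ht_pos hcm hw0
  have hte : ht (c • hat x - hat y) = c - 1 := by simp
  have hc1 : 0 < c - 1 := hte ▸ hpos
  have hpt : pt (c • hat x - hat y) = x + (-(c - 1)⁻¹) • (y - x) := by
    unfold pt
    rw [hte]
    simp only [map_sub, map_smul, pr_hat]
    match_scalars <;> field_simp
    ring
  refine ⟨pt (c • hat x - hat y), ?_, ?_, ?_⟩
  · rw [hΩ.op.frontier_eq]
    refine ⟨CDom.pt_cl hcm hpos, fun hm => ?_⟩
    obtain ⟨ε, hε, hεm⟩ := hK.exists_sub_mem (x := c • hat x - hat y) ⟨hpos, hm⟩ (hat x)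
    have := (hK.gauge_le (hat_mem.2 hx) (x := hat y) (c := c - ε)).1 (by
      have := subset_closure hεm
      rwa [show c • hat x - hat y - ε • hat x = (c - ε) • hat x - hat y by module] at this)
    linarith
  · apply collinear_insert_of_mem_affineSpan_pair
    rw [hpt]
    have := AffineMap.lineMap_mem_affineSpan_pair (-(c - 1)⁻¹) x y
    rw [AffineMap.lineMap_apply, vsub_eq_sub, vadd_eq_add] at this
    rwa [add_comm]
  · have hn : 0 < ‖y - x‖ := norm_pos_iff.2 (sub_ne_zero.2 hxy.symm)
    have hi : 0 < (c - 1)⁻¹ := by positivity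
    rw [hpt, dist_eq_norm, dist_eq_norm, add_sub_cancel_left,
      show x + (-(c - 1)⁻¹) • (y - x) - y = (-(1 + (c - 1)⁻¹)) • (y - x) by module, norm_smul,
      norm_smul, Real.norm_eq_abs, Real.norm_eq_abs, abs_neg, abs_neg, abs_of_pos hi,
      abs_of_pos (by linarith)]
    nlinarith

/-- The Hilbert metric of the domain is the logarithm of the cross-ratio of its cone. -/
theorem CDom.hilbertDist_eq {Ω : Set (Euc n)} (hΩ : CDom Ω) {x y : Euc n} (hx : x ∈ Ω)
    (hy : y ∈ Ω) : hilbertDist Ω x y = Real.log (hN (coneOf Ω) (hat x) (hat y)) := by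
  unfold hilbertDist
  have hswap : ∀ β : Euc n, ({β, x, y} : Set (Euc n)) = {β, y, x} := fun β => by
    rw [pair_comm x y]
  by_cases hxy : x = y
  · subst hxy
    rw [dif_neg]
    · rw [hN, hΩ.pcone.gauge_self (hat_mem.2 hx)]
      simp
    · rintro ⟨p, hp⟩
      exact lt_irrefl _ hp.2.2.2.2.1
  · have hex : ∃ p : Euc n × Euc n, IsHilbertPair Ω x y p.1 p.2 := by
      obtain ⟨α, hα, hαc, hαd⟩ := hΩ.exists_end hx hxy
      obtain ⟨β, hβ, hβc, hβd⟩ := hΩ.exists_end hy (Ne.symm hxy)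
      exact ⟨(α, β), hα, hβ, hαc, by rw [hswap]; exact hβc, hαd, hβd⟩
    rw [dif_pos hex]
    obtain ⟨h1, h2, h3, h4, h5, h6⟩ := hex.choose_spec
    rw [hΩ.ratio hx hy hxy h1 h3 h5,
      hΩ.ratio hy hx (Ne.symm hxy) h2 (by rw [← hswap]; exact h4) h6, mul_comm]
    rfl

/-- The homogeneous extension of an isometry of domains is an isometry of their cones. -/
theorem projIso_of_isometry {Ω Ω' : Set (Euc n)} (hΩ : CDom Ω) (hΩ' : CDom Ω') {τ : Euc n → Euc n}
    (hτ : IsHilbertIsometry Ω Ω' τ) :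
    ProjIso (coneOf Ω) (coneOf Ω') (fun w => ht w • hat (τ (pt w))) where
  maps w hw := (smul_hat_mem hw.1).2 (hτ.1 hw.2)
  surj z hz := by
    obtain ⟨r, hr, y, hy, rfl⟩ := exists_of_mem hz
    obtain ⟨x, hx, rfl⟩ := hτ.2.1 hy
    refine ⟨r • hat x, (smul_hat_mem hr).2 hx, ?_⟩
    simp [pt_smul_hat hr.ne']
  hom w hw r hr := by
    obtain ⟨s, hs, x, hx, rfl⟩ := exists_of_mem hw
    have hrs : r * s ≠ 0 := by positivity
    simp [smul_smul, pt_smul_hat hrs, pt_smul_hat hs.ne']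
  iso w hw z hz := by
    obtain ⟨r, hr, x, hx, rfl⟩ := exists_of_mem hw
    obtain ⟨s, hs, y, hy, rfl⟩ := exists_of_mem hz
    have hx' := hτ.1 hx
    have hy' := hτ.1 hy
    simp only [map_smul, ht_hat, smul_eq_mul, mul_one, pt_smul_hat hr.ne', pt_smul_hat hs.ne']
    rw [hΩ'.pcone.hN_smul (hat_mem.2 hx') (hat_mem.2 hy') hr hs,
      hΩ.pcone.hN_smul (hat_mem.2 hx) (hat_mem.2 hy) hr hs]
    have h1 := hτ.2.2 x hx y hy
    rw [hΩ.hilbertDist_eq hx hy, hΩ'.hilbertDist_eq hx' hy'] at h1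
    refine Real.log_injOn_pos ?_ ?_ h1
    · exact one_pos.trans_le (hΩ'.pcone.one_le_hN' (hat_mem.2 hx') (hat_mem.2 hy'))
    · exact one_pos.trans_le (hΩ.pcone.one_le_hN' (hat_mem.2 hx) (hat_mem.2 hy))

end Hilbert

/-! ### Vertices, cones and homogeneity of domains -/

section Translation

variable {n : ℕ}

/-- A domain which is a cone with vertex `v` gives the projection of the cone over it onto the
ray of `v`, along the linear span of the hyperplane of the base. -/
theorem IsCone.exists_vertex {Ω : Set (Euc n)} (hc : IsCone Ω) :
    ∃ P, IsVertex (coneOf Ω) P := by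
  obtain ⟨v, B, f, c, -, hB, hv, -, -, -, -, -, hΩ⟩ := hc
  have hd : c - f v ≠ 0 := sub_ne_zero.2 (Ne.symm hv)
  set l : Amb n →ₗ[ℝ] ℝ := (c - f v)⁻¹ • (c • ht - f ∘ₗ pr) with hl
  have lhat : ∀ x, l (hat x) = (c - f v)⁻¹ * (c - f x) := by
    intro x
    simp [hl]
  have lv : l (hat v) = 1 := by rw [lhat, inv_mul_cancel₀ hd]
  have lB : ∀ b ∈ B, l (hat b) = 0 := by
    intro b hb
    rw [lhat, hB b hb, sub_self, mul_zero]
  -- every vector of the cone is a positive combination of `v̂` and a vector of the base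
  have dec : ∀ X ∈ coneOf Ω, ∃ a b' : ℝ, 0 < a ∧ 0 < b' ∧ ∃ b ∈ B, X = a • hat v + b' • hat b := by
    intro X hX
    obtain ⟨r, hr, x, hx, rfl⟩ := exists_of_mem hX
    rw [hΩ] at hx
    simp only [mem_iUnion] at hx
    obtain ⟨b, hb, a, b', ha, hb', hab, rfl⟩ := hx
    refine ⟨r * a, r * b', by positivity, by positivity, b, hb, ?_⟩
    rw [← comb_hat hab, smul_add, smul_smul, smul_smul]
  have comp : ∀ a b' : ℝ, 0 < a → 0 < b' → ∀ b ∈ B, a • hat v + b' • hat b ∈ coneOf Ω := by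
    intro a b' ha hb' b hb
    have hs : 0 < a + b' := by positivity
    have e : a • hat v + b' • hat b = (a + b') • hat ((a / (a + b')) • v + (b' / (a + b')) • b) := by
      rw [← comb_hat (by field_simp), smul_add, smul_smul, smul_smul, mul_div_cancel₀ _ hs.ne',
        mul_div_cancel₀ _ hs.ne']
    rw [e, smul_hat_mem hs, hΩ]
    simp only [mem_iUnion]
    exact ⟨b, hb, _, _, by positivity, by positivity, by field_simp, rfl⟩
  have lc : ∀ a b' : ℝ, ∀ b ∈ B, l (a • hat v + b' • hat b) = a := by
    intro a b' b hb
    rw [map_add, map_smul, map_smul, lv, lB b hb]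
    simp
  refine ⟨l.smulRight (hat v), ⟨?_, ?_, ?_, ?_⟩, l, hat v, fun X => rfl, ?_⟩
  · intro X
    simp [lv]
  · intro X hX r hr
    obtain ⟨a, b', ha, hb', b, hb, rfl⟩ := dec X hX
    have := comp a (r * b') ha (by positivity) b hb
    rw [fl, LinearMap.smulRight_apply, lc a b' b hb, add_sub_cancel_left, smul_smul]
    exact this
  · intro X hX
    obtain ⟨a, b', ha, hb', b, hb, rfl⟩ := dec X hX
    rw [LinearMap.smulRight_apply, lc a b' b hb]
    exact smul_ne_zero ha.ne' (hat_ne_zero v)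
  · intro X hX
    obtain ⟨a, b', ha, hb', b, hb, rfl⟩ := dec X hX
    rw [LinearMap.smulRight_apply, lc a b' b hb, add_sub_cancel_left]
    exact smul_ne_zero hb'.ne' (hat_ne_zero b)
  · intro X hX
    obtain ⟨a, b', ha, hb', b, hb, rfl⟩ := dec X hX
    rwa [lc a b' b hb]

/-- The vertex can be normalized to lie in the affine chart. -/
theorem IsVertex.normalize {Ω : Set (Euc n)} (hΩ : CDom Ω) {P : Amb n →ₗ[ℝ] Amb n}
    (hv : IsVertex (coneOf Ω) P) :
    ∃ (l : Amb n →ₗ[ℝ] ℝ) (v : Euc n), (∀ X, P X = l X • hat v) ∧ l (hat v) = 1 ∧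
      ∀ X ∈ coneOf Ω, 0 < l X := by
  obtain ⟨hj, l, v, hP, hl⟩ := hv
  have hK := hΩ.pcone
  obtain ⟨X, hX⟩ := hK.nonempty
  have hlX := hl X hX
  have hPX := hj.left_cl hK (subset_closure hX)
  have hP0 := hj.left_ne X hX
  have hvc : v ∈ closure (coneOf Ω) := by
    have := hK.smul_cl hPX (r := (l X)⁻¹) (by positivity)
    rwa [hP, smul_smul, inv_mul_cancel₀ hlX.ne', one_smul] at this
  have hv0 : v ≠ 0 := by
    rintro rfl
    rw [hP, smul_zero] at hP0
    exact hP0 rfl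
  have hh := hΩ.ht_pos hvc hv0
  have hP1 : ∀ X, P X = (ht v • l) X • hat (pt v) := by
    intro X
    rw [hP, LinearMap.smul_apply, smul_eq_mul, mul_comm, mul_smul, smul_hat_pt hh.ne']
  refine ⟨ht v • l, pt v, hP1, ?_, ?_⟩
  · have h1 := hj.idem X
    rw [hP1 X, map_smul, hP1 (hat (pt v))] at h1
    have hne : (ht v • l) X ≠ 0 := by
      rw [LinearMap.smul_apply, smul_eq_mul]
      positivity
    have h2 := smul_right_injective _ hne h1
    have h3 : ((ht v • l) (hat (pt v)) - 1) • hat (pt v) = 0 := by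
      rw [sub_smul, one_smul, sub_eq_zero]
      exact h2
    have := (smul_eq_zero.1 h3).resolve_right (hat_ne_zero _)
    linarith
  · intro X hX
    have := hl X hX
    rw [LinearMap.smul_apply, smul_eq_mul]
    positivity

/-- Conversely, a vertex projection `P = l ⊗ v̂` exhibits `Ω` as a cone with vertex `v`. The base
consists of the points `b` of the hyperplane `l b̂ = 0` whose midpoint with `v` lies in `Ω`. -/
theorem IsVertex.isCone {Ω : Set (Euc n)} (hΩ : CDom Ω) {P : Amb n →ₗ[ℝ] Amb n}
    (hv : IsVertex (coneOf Ω) P) : IsCone Ω := by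
  obtain ⟨l, v, hP, hlv, hl⟩ := hv.normalize hΩ
  have hj := hv.1
  have hK := hΩ.pcone
  set f : Euc n →ₗ[ℝ] ℝ := l ∘ₗ emb with hf
  set c : ℝ := - l (hat 0) with hc
  have hfc : ∀ x, f x = c ↔ l (hat x) = 0 := by
    intro x
    rw [hat_eq x, map_add, hc, hf]
    simp only [LinearMap.comp_apply]
    constructor <;> intro h1 <;> linarith
  set B : Set (Euc n) := {b | f b = c ∧ hat v + hat b ∈ coneOf Ω} with hB
  have hmid : ∀ b, hat v + hat b ∈ coneOf Ω ↔ (1/2 : ℝ) • v + (1/2 : ℝ) • b ∈ Ω := by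
    intro b
    rw [← smul_hat_mem (Ω := Ω) two_pos, ← comb_hat (by norm_num), smul_add, smul_smul, smul_smul]
    norm_num
  have dec : ∀ x ∈ Ω, ∃ b ∈ B, x ∈ openSegment ℝ v b := by
    intro x hx
    have hX := hat_mem.2 hx
    have hq := hj.right_cl hK (subset_closure hX)
    have hq0 := hj.right_ne _ hX
    have hμ := hΩ.ht_pos hq hq0
    have hlX := hl _ hX
    set μ := ht (hat x - P (hat x)) with hμd
    set b := pt (hat x - P (hat x)) with hbd
    have hqb : hat x - P (hat x) = μ • hat b := (smul_hat_pt hμ.ne').symm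
    have hlq : l (hat x - P (hat x)) = 0 := by
      rw [hP, map_sub, map_smul, hlv]; simp
    have hlb : l (hat b) = 0 := by
      rw [hqb, map_smul, smul_eq_mul] at hlq
      exact (mul_eq_zero.1 hlq).resolve_left hμ.ne'
    have hμ1 : l (hat x) + μ = 1 := by
      rw [hμd, hP, map_sub, map_smul, ht_hat, ht_hat]; simp
    refine ⟨b, ⟨(hfc b).2 hlb, ?_⟩, l (hat x), μ, hlX, hμ, hμ1, ?_⟩
    · have h1 := hj.flow _ hX (l (hat x) / μ) (by positivity)
      have h2 := hK.smul_mem _ h1 (l (hat x))⁻¹ (by positivity)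
      rw [fl, hqb, hP, smul_smul, div_mul_cancel₀ _ hμ.ne', ← smul_add, smul_smul,
        inv_mul_cancel₀ hlX.ne', one_smul] at h2
      exact h2
    · apply hat_inj
      rw [← comb_hat hμ1, ← hqb, hP]
      abel
  obtain ⟨x₀, hx₀⟩ := hΩ.ne
  obtain ⟨b₀, hb₀, -⟩ := dec x₀ hx₀
  have hvc : f v ≠ c := by
    rw [Ne, hfc, hlv]
    exact one_ne_zero
  have hcont : Continuous fun b : Euc n => hat v + hat b := continuous_const.add continuous_hat
  have hBspan : (affineSpan ℝ B : Set (Euc n)) = {x | f x = c} := by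
    apply Subset.antisymm
    · intro x hx
      have key : f x = c := affineSpan_induction (p := fun x => f x = c) hx (fun y hy => hy.1)
        (fun r u v w hu hv hw => by
          rw [vsub_eq_sub, vadd_eq_add, map_add, map_smul, map_sub, hu, hv, hw]
          simp)
      exact key
    · intro x hx
      have hx' : f x = c := hx
      -- a small step from `b₀` towards `x` stays in `B`
      have hcon : Continuous fun t : ℝ => b₀ + t • (x - b₀) := by fun_prop
      have h0 : hat v + hat (b₀ + (0:ℝ) • (x - b₀)) ∈ coneOf Ω := by simpa using hb₀.2
      have hnh := (hK.isOpen.preimage (hcont.comp hcon)).mem_nhds (x := (0:ℝ)) h0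
      obtain ⟨ε, hε, hball⟩ := Metric.mem_nhds_iff.1 hnh
      have hm : b₀ + (ε / 2) • (x - b₀) ∈ B := by
        refine ⟨?_, ?_⟩
        · rw [map_add, map_smul, map_sub, hb₀.1, hx']
          simp
        · have : ε / 2 ∈ Metric.ball (0:ℝ) ε := by
            rw [Metric.mem_ball, dist_zero_right, Real.norm_eq_abs, abs_of_pos (by positivity)]
            linarith
          exact hball this
      have := AffineMap.lineMap_mem (ε / 2)⁻¹ (subset_affineSpan ℝ B hb₀) (subset_affineSpan ℝ B hm)
      rw [AffineMap.lineMap_apply, vsub_eq_sub, vadd_eq_add, add_sub_cancel_left, smul_smul,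
        inv_mul_cancel₀ (by positivity), one_smul, sub_add_cancel] at this
      exact this
  refine ⟨v, B, f, c, ?_, fun b hb => hb.1, hvc, ⟨b₀, hb₀⟩, ?_, ?_, ?_, hBspan, ?_⟩
  · intro h0
    apply hvc
    rw [← hb₀.1, h0]
    rfl
  · intro x hx y hy a b ha hb hab
    refine ⟨?_, ?_⟩
    · rw [map_add, map_smul, map_smul, hx.1, hy.1, ← add_smul, hab, one_smul]
    · have := hK.convex hx.2 hy.2 ha hb hab
      rwa [smul_add, smul_add, add_add_add_comm, ← add_smul, hab, one_smul, comb_hat hab] at this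
  · obtain ⟨R, hR⟩ := isBounded_iff_forall_norm_le.1 hΩ.bd
    rw [isBounded_iff_forall_norm_le]
    refine ⟨2 * R + ‖v‖, fun b hb => ?_⟩
    have h1 := hR _ ((hmid b).1 hb.2)
    have h2 : b = (2:ℝ) • ((1/2 : ℝ) • v + (1/2 : ℝ) • b) - v := by module
    rw [h2]
    refine (norm_sub_le _ _).trans ?_
    rw [norm_smul]
    norm_num at h1 ⊢
    linarith
  · apply Subset.antisymm
    · intro b hb
      rw [mem_intrinsicInterior]
      refine ⟨⟨b, subset_affineSpan ℝ B hb⟩, ?_, rfl⟩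
      have hpre : ((↑) ⁻¹' B : Set (affineSpan ℝ B)) =
          (fun y : affineSpan ℝ B => hat v + hat (y : Euc n)) ⁻¹' coneOf Ω := by
        ext y
        constructor
        · intro hy
          exact hy.2
        · intro hy
          refine ⟨?_, hy⟩
          have : (y : Euc n) ∈ (affineSpan ℝ B : Set (Euc n)) := y.2
          rw [hBspan] at this
          exact this
      have hopn : IsOpen ((fun y : affineSpan ℝ B => hat v + hat (y : Euc n)) ⁻¹' coneOf Ω) :=
        hK.isOpen.preimage (hcont.comp continuous_subtype_val)
      rw [hpre, hopn.interior_eq]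
      exact hb.2
    · exact intrinsicInterior_subset
  · apply Subset.antisymm
    · intro x hx
      simp only [mem_iUnion]
      obtain ⟨b, hb, hs⟩ := dec x hx
      exact ⟨b, hb, hs⟩
    · intro x hx
      simp only [mem_iUnion] at hx
      obtain ⟨b, hb, a, b', ha, hb', hab, rfl⟩ := hx
      have h1 := hj.flow _ hb.2 (b' / a) (by positivity)
      have hlb := (hfc b).1 hb.1
      have h2 := hK.smul_mem _ h1 a ha
      rw [fl, hP, map_add, hlv, hlb, add_zero, one_smul, add_sub_cancel_left, smul_add, smul_smul,
        mul_div_cancel₀ _ ha.ne', comb_hat hab, hat_mem] at h2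
      exact h2

theorem projMap_chart (g : Amb n ≃ₗ[ℝ] Amb n) (x y : Euc n) :
    projMap g (chart x) = chart y ↔ ∃ a : ℝ, a ≠ 0 ∧ g (hat x) = a • hat y := by
  unfold projMap chart
  rw [Projectivization.map_mk, Projectivization.mk_eq_mk_iff']
  constructor
  · rintro ⟨a, ha⟩
    refine ⟨a, ?_, ha.symm⟩
    rintro rfl
    rw [zero_smul] at ha
    exact hat_ne_zero x (g.map_eq_zero_iff.1 ha.symm)
  · rintro ⟨a, -, ha⟩
    exact ⟨a, ha.symm⟩

/-- A linear map inducing a projective automorphism of `Ω` preserves the cone as soon as it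
preserves the sign of the height somewhere: the height of the image is affine and nonvanishing on
the convex set `Ω`. -/
theorem CDom.preserves {Ω : Set (Euc n)} (hΩ : CDom Ω) (g : Amb n ≃ₗ[ℝ] Amb n)
    (h1 : ∀ z ∈ Ω, ∃ z' ∈ Ω, ∃ a : ℝ, a ≠ 0 ∧ g (hat z) = a • hat z')
    (h2 : ∀ z' ∈ Ω, ∃ z ∈ Ω, ∃ a : ℝ, a ≠ 0 ∧ g (hat z) = a • hat z')
    {x : Euc n} (hx : x ∈ Ω) (hpos : 0 < ht (g (hat x))) (Z : Amb n) :
    Z ∈ coneOf Ω ↔ g Z ∈ coneOf Ω := by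
  have hne : ∀ z ∈ Ω, ht (g (hat z)) ≠ 0 := by
    intro z hz
    obtain ⟨z', -, a, ha, he⟩ := h1 z hz
    rw [he]
    simpa using ha
  have hall : ∀ z ∈ Ω, 0 < ht (g (hat z)) := by
    intro z hz
    by_contra hle
    have hlt : ht (g (hat z)) < 0 := lt_of_le_of_ne (not_lt.1 hle) (hne z hz)
    set p := ht (g (hat x)) with hp
    set q := ht (g (hat z)) with hq
    have hd : 0 < p - q := by linarith
    have hd0 : p - q ≠ 0 := hd.ne'
    have hab : -q / (p - q) + p / (p - q) = 1 := by field_simp; ring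
    have hm := hΩ.cv hx hz (a := -q / (p - q)) (b := p / (p - q))
      (div_nonneg (by linarith) hd.le) (by positivity) hab
    apply hne _ hm
    rw [← comb_hat hab, map_add, map_smul, map_smul, map_add, map_smul, map_smul, ← hp, ← hq]
    simp only [smul_eq_mul]
    field_simp
    ring
  have hK := hΩ.pcone
  constructor
  · intro hZ
    obtain ⟨r, hr, z, hz, rfl⟩ := exists_of_mem hZ
    obtain ⟨z', hz', a, -, he⟩ := h1 z hz
    have ha := hall z hz
    rw [he] at ha
    have ha' : 0 < a := by simpa using ha
    rw [map_smul, he, smul_smul, smul_hat_mem (by positivity)]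
    exact hz'
  · intro hZ
    obtain ⟨r, hr, z', hz', hZe⟩ := exists_of_mem hZ
    obtain ⟨z, hz, a, ha0, he⟩ := h2 z' hz'
    have ha := hall z hz
    rw [he] at ha
    have ha' : 0 < a := by simpa using ha
    have : Z = (r * a⁻¹) • hat z := by
      apply g.injective
      rw [hZe, map_smul, he, smul_smul, inv_mul_cancel_right₀ ha0]
    rw [this, smul_hat_mem (by positivity)]
    exact hz

theorem CDom.coneHomogeneous {Ω : Set (Euc n)} (hΩ : CDom Ω) (hh : IsHomogeneousDomain Ω) :
    ConeHomogeneous (coneOf Ω) := by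
  intro X hX Y hY
  obtain ⟨r, hr, x, hx, rfl⟩ := exists_of_mem hX
  obtain ⟨s, hs, y, hy, rfl⟩ := exists_of_mem hY
  obtain ⟨g, hg, hgx⟩ := hh x hx y hy
  have h1 : ∀ z ∈ Ω, ∃ z' ∈ Ω, ∃ a : ℝ, a ≠ 0 ∧ g (hat z) = a • hat z' := by
    intro z hz
    have : projMap g (chart z) ∈ chart '' Ω := hg ▸ mem_image_of_mem _ (mem_image_of_mem _ hz)
    obtain ⟨z', hz', he⟩ := this
    exact ⟨z', hz', (projMap_chart g z z').1 he.symm⟩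
  have h2 : ∀ z' ∈ Ω, ∃ z ∈ Ω, ∃ a : ℝ, a ≠ 0 ∧ g (hat z) = a • hat z' := by
    intro z' hz'
    have : chart z' ∈ projMap g '' (chart '' Ω) := by
      rw [hg]
      exact mem_image_of_mem _ hz'
    obtain ⟨-, ⟨z, hz, rfl⟩, he⟩ := this
    exact ⟨z, hz, (projMap_chart g z z').1 he⟩
  obtain ⟨a, ha, hae⟩ := (projMap_chart g x y).1 hgx
  -- `g` represents its projective class only up to sign; choose the one preserving the cone
  rcases lt_or_gt_of_ne ha with hneg | hpos
  · set g' : Amb n ≃ₗ[ℝ] Amb n := g.trans (LinearEquiv.neg ℝ) with hg'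
    have hg'a : ∀ w, g' w = - g w := fun w => by simp [hg']
    have hneg' : ∀ z z', (∃ a : ℝ, a ≠ 0 ∧ g (hat z) = a • hat z') →
        ∃ a : ℝ, a ≠ 0 ∧ g' (hat z) = a • hat z' := by
      rintro z z' ⟨a, ha, he⟩
      exact ⟨-a, neg_ne_zero.2 ha, by rw [hg'a, he, neg_smul]⟩
    refine ⟨g', hΩ.preserves g' (fun z hz => ?_) (fun z hz => ?_) hx ?_, r * -a / s, ?_, ?_⟩
    · obtain ⟨z', hz', he⟩ := h1 z hz
      exact ⟨z', hz', hneg' _ _ he⟩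
    · obtain ⟨z', hz', he⟩ := h2 z hz
      exact ⟨z', hz', hneg' _ _ he⟩
    · rw [hg'a, hae]
      simpa using hneg
    · have : 0 < -a := by linarith
      positivity
    · rw [map_smul, hg'a, hae, smul_smul, div_mul_cancel₀ _ hs.ne', ← neg_smul, smul_smul]
  · refine ⟨g, hΩ.preserves g h1 h2 hx (by rw [hae]; simpa using hpos), r * a / s, by positivity, ?_⟩
    rw [map_smul, hae, smul_smul, smul_smul, div_mul_cancel₀ _ hs.ne']

theorem homogeneousDomain_of_cone {Ω : Set (Euc n)} (hh : ConeHomogeneous (coneOf Ω)) :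
    IsHomogeneousDomain Ω := by
  intro x hx y hy
  obtain ⟨g, hg, s, hs, hgx⟩ := hh _ (hat_mem.2 hx) _ (hat_mem.2 hy)
  refine ⟨g, ?_, (projMap_chart g x y).2 ⟨s, hs.ne', hgx⟩⟩
  apply Subset.antisymm
  · rintro - ⟨-, ⟨z, hz, rfl⟩, rfl⟩
    obtain ⟨r, hr, z', hz', he⟩ := exists_of_mem ((hg _).1 (hat_mem.2 hz))
    exact ⟨z', hz', ((projMap_chart g z z').2 ⟨r, hr.ne', he⟩).symm⟩
  · rintro - ⟨z', hz', rfl⟩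
    have hm : g.symm (hat z') ∈ coneOf Ω := (hg _).2 (by simpa using hat_mem.2 hz')
    obtain ⟨r, hr, z, hz, he⟩ := exists_of_mem hm
    refine ⟨chart z, mem_image_of_mem _ hz, (projMap_chart g z z').2 ⟨r⁻¹, inv_ne_zero hr.ne', ?_⟩⟩
    have h1 : hat z = r⁻¹ • g.symm (hat z') := by
      rw [he, smul_smul, inv_mul_cancel₀ hr.ne', one_smul]
    rw [h1, map_smul, g.apply_symm_apply]

end Translation

/-- If `Ω` and `Ω'` are isometric Hilbert geometries and `Ω` is a
homogeneous cone, then `Ω'` is a homogeneous cone. -/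
theorem stmt_8 {n : ℕ} (Ω Ω' : Set (Euc n))
    (hne : Ω.Nonempty) (hop : IsOpen Ω) (hbd : Bornology.IsBounded Ω) (hcv : Convex ℝ Ω)
    (hne' : Ω'.Nonempty) (hop' : IsOpen Ω') (hbd' : Bornology.IsBounded Ω')
    (hcv' : Convex ℝ Ω')
    (hiso : ∃ τ : Euc n → Euc n, IsHilbertIsometry Ω Ω' τ)
    (hcone : IsCone Ω) (hhom : IsHomogeneousDomain Ω) :
    IsCone Ω' ∧ IsHomogeneousDomain Ω' := by
  have hΩ : CDom Ω := ⟨hne, hop, hbd, hcv⟩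
  have hΩ' : CDom Ω' := ⟨hne', hop', hbd', hcv'⟩
  obtain ⟨τ, hτ⟩ := hiso
  obtain ⟨P, hP⟩ := hcone.exists_vertex
  obtain ⟨⟨P', hP'⟩, hh⟩ := (projIso_of_isometry hΩ hΩ' hτ).homogeneous hΩ.pcone hΩ'.pcone
    hΩ.gen hΩ'.gen hP (hΩ.coneHomogeneous hhom)
  exact ⟨hP'.isCone hΩ', homogeneousDomain_of_cone hh⟩
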